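/- arXiv:2306.14323 — 2 statements merged into one kernel-verified Lean document; each statement's English description precedes it below -/
import Mathlib

section
/- Example 2 (degraded message sets, Coding scheme 1 strictly outperforms Coding scheme 2): Consider the binary SD-MAWC with degraded message sets, causal CSI at both encoders, Y = X1 when S = 0 and Y = X2 when S = 1, Z = X1, and Pr{S=1} = p = 0.8. Then: (i) for every admissible joint law, I(U1;Y|S,U,U2) <= I(U1;Z|S,U,U2), so the Coding scheme 1 region reduces to R^{CSI-E}_{D,12} and the Coding scheme 2 region reduces to R^{CSI-E}_{D,22}; (ii) choosing V = S, U empty, U1 = X1 with Pr{X1=0} = 0.2 and U2 = X2 with Pr{X2=0} = 0.8, R^{CSI-E}_{D,12} contains a point with R1 = min{I(S;Y), I(X1;Y|X2,S)} = min{0.182..., 0.144...} = 0.144... = 0.2*h(0.2), whereas every point of R^{CSI-E}_{D,22} satisfies R1 <= log2(1 + (1-p) * p^{p/(1-p)}) = 0.114...; (iii) the sum-rate bound of R^{CSI-E}_{D,12} with V = S equals I(U,U1,U2;Y) - H(S|Y,U,U1,U2) and thus covers the sum-rate bound of R^{CSI-E}_{D,22}, and consequently R^{CSI-E}_{D,22}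 is included in R^{CSI-E}_{D,12} for this channel. -/
/-!
All the inequalities come from writing the joint laws in kernel form `q(c) r(a|c) k(b|c,a)`: then
`I(A;B|C)` is the `q`-average of a Jensen gap of the entropy (`cMI_eq`).

*Comparison of `Y` and `Z`.* Given `(S,U,U2)`, for `S = 0` both outputs are `X1`, while for `S = 1`
the output `Y = X2` is independent of `U1`, so its Jensen gap is zero (`jensen_part`). Scheme-1
laws reduce to scheme-2 laws by summing out `V` (`law_forgetV`).

*Scheme 2.* Independence of `S` from `(U,U1,U2)` gives
`I(U1;Y|U,U2) - H(S|U,U1,U2,Y) = H(Y|U,U2) - H(S) - H(Y|S,U,U1,U2)`. For each `(u,u2)` the law of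
`Y` is a mixture of two binary laws with weights `0.2` and `0.8`, and
`h(0.2 a + 0.8 b) ≤ h(0.2) + 0.8 h(b)` (`binEntropy_mix_le`) shows that this quantity is at
most `0` (`secrecy_rate_nonpos`). Hence every scheme-2 point has `R1 = 0`, which is stronger than
the bound `log2(1 + 0.2 * 0.8^4)`. It also yields the inclusion of regions: with `V` constant the
secret-key rate is `0`, and the scheme-1 sum rate exceeds the scheme-2 one by
`H(S|U,U1,U2,Y) ≥ 0` (`inclusion`).

*Scheme 1.* For `V = S`, `U1 = X1`, `U2 = X2` independent, the bounds are
`R_SK = I(S;Y) = h(0.32) - h(0.2)`, `I(X1;Y|X2,S) = 0.2 h(0.2)` and the sum rate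
`h(0.32) - h(0.2)`. The point `(0, 0.2 h(0.2))` is in the region because
`1.2 h(0.2) ≤ h(0.32)`, that is, `17^17 ≤ 5^20 * 2^24` (`entropy_numeric`).
-/

open scoped BigOperators

noncomputable section

namespace Paper

/-- `p` is a probability mass function on the finite type `α`. -/
def IsPmf {α : Type*} [Fintype α] (p : α → ℝ) : Prop :=
  (∀ a, 0 ≤ p a) ∧ ∑ a, p a = 1

/-- `k` is a conditional pmf (a channel / stochastic kernel). -/
def IsKernel {α β : Type*} [Fintype β] (k : α → β → ℝ) : Prop :=
  ∀ a, IsPmf (k a)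

/-- Shannon entropy (base 2) of a mass function on a finite type. -/
def ent {α : Type*} [Fintype α] (p : α → ℝ) : ℝ :=
  -∑ a, p a * Real.logb 2 (p a)

/-- Law (pushforward) of the random variable `X` under the mass function `p`. -/
def law {Ω α : Type*} [Fintype Ω] [DecidableEq α] (p : Ω → ℝ) (X : Ω → α) :
    α → ℝ := fun a => ∑ ω, if X ω = a then p ω else 0

/-- Entropy `H(X)` of a random variable `X`. -/
def H {Ω α : Type*} [Fintype Ω] [Fintype α] [DecidableEq α] (p : Ω → ℝ)
    (X : Ω → α) : ℝ := ent (law p X)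

/-- Conditional entropy `H(X|Y)`. -/
def Hc {Ω α β : Type*} [Fintype Ω] [Fintype α] [Fintype β] [DecidableEq α]
    [DecidableEq β] (p : Ω → ℝ) (X : Ω → α) (Y : Ω → β) : ℝ :=
  H p (fun ω => (X ω, Y ω)) - H p Y

/-- Mutual information `I(X;Y)`. -/
def MI {Ω α β : Type*} [Fintype Ω] [Fintype α] [Fintype β] [DecidableEq α]
    [DecidableEq β] (p : Ω → ℝ) (X : Ω → α) (Y : Ω → β) : ℝ :=
  H p X + H p Y - H p (fun ω => (X ω, Y ω))

/-- Conditional mutual information `I(X;Y|Z)`. -/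
def cMI {Ω α β γ : Type*} [Fintype Ω] [Fintype α] [Fintype β] [Fintype γ]
    [DecidableEq α] [DecidableEq β] [DecidableEq γ] (p : Ω → ℝ) (X : Ω → α)
    (Y : Ω → β) (Z : Ω → γ) : ℝ :=
  Hc p X Z - Hc p X (fun ω => (Y ω, Z ω))

/-- Kullback–Leibler divergence (base 2). -/
def KL {α : Type*} [Fintype α] (p q : α → ℝ) : ℝ :=
  ∑ a, p a * Real.logb 2 (p a / q a)

/-- Binary entropy function. -/
def hb (x : ℝ) : ℝ := -(x * Real.logb 2 x) - (1 - x) * Real.logb 2 (1 - x)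

/-- A (message-indexed) encoder is causal: its `j`-th output symbol depends only on the
first `j` state symbols. -/
def Causal {M A B : Type*} {n : ℕ} (e : M → (Fin n → A) → Fin n → B) : Prop :=
  ∀ m s s' j, (∀ i, i ≤ j → s i = s' i) → e m s j = e m s' j

/-- A strictly causal encoder: its `j`-th output symbol depends only on the state symbols
strictly before `j`. -/
def StrictlyCausal {M A B : Type*} {n : ℕ} (e : M → (Fin n → A) → Fin n → B) : Prop :=
  ∀ m s s' j, (∀ i, i < j → s i = s' i) → e m s j = e m s' j

/-- Sample space carrying the auxiliary random variables `(V,U,U1,U2,X1,X2,S,Y,Z)`. -/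
abbrev O9 (V U U1 U2 A1 A2 AS AY AZ : Type) : Type :=
  V × U × U1 × U2 × A1 × A2 × AS × AY × AZ

namespace O9
variable {V U U1 U2 A1 A2 AS AY AZ : Type}
def v (ω : O9 V U U1 U2 A1 A2 AS AY AZ) : V := ω.1
def u (ω : O9 V U U1 U2 A1 A2 AS AY AZ) : U := ω.2.1
def u1 (ω : O9 V U U1 U2 A1 A2 AS AY AZ) : U1 := ω.2.2.1
def u2 (ω : O9 V U U1 U2 A1 A2 AS AY AZ) : U2 := ω.2.2.2.1
def x1 (ω : O9 V U U1 U2 A1 A2 AS AY AZ) : A1 := ω.2.2.2.2.1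
def x2 (ω : O9 V U U1 U2 A1 A2 AS AY AZ) : A2 := ω.2.2.2.2.2.1
def s (ω : O9 V U U1 U2 A1 A2 AS AY AZ) : AS := ω.2.2.2.2.2.2.1
def y (ω : O9 V U U1 U2 A1 A2 AS AY AZ) : AY := ω.2.2.2.2.2.2.2.1
def z (ω : O9 V U U1 U2 A1 A2 AS AY AZ) : AZ := ω.2.2.2.2.2.2.2.2
end O9

/-- Sample space carrying the auxiliary random variables `(U,U1,U2,X1,X2,S,Y,Z)`. -/
abbrev O8 (U U1 U2 A1 A2 AS AY AZ : Type) : Type :=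
  U × U1 × U2 × A1 × A2 × AS × AY × AZ

namespace O8
variable {U U1 U2 A1 A2 AS AY AZ : Type}
def u (ω : O8 U U1 U2 A1 A2 AS AY AZ) : U := ω.1
def u1 (ω : O8 U U1 U2 A1 A2 AS AY AZ) : U1 := ω.2.1
def u2 (ω : O8 U U1 U2 A1 A2 AS AY AZ) : U2 := ω.2.2.1
def x1 (ω : O8 U U1 U2 A1 A2 AS AY AZ) : A1 := ω.2.2.2.1
def x2 (ω : O8 U U1 U2 A1 A2 AS AY AZ) : A2 := ω.2.2.2.2.1
def s (ω : O8 U U1 U2 A1 A2 AS AY AZ) : AS := ω.2.2.2.2.2.1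
def y (ω : O8 U U1 U2 A1 A2 AS AY AZ) : AY := ω.2.2.2.2.2.2.1
def z (ω : O8 U U1 U2 A1 A2 AS AY AZ) : AZ := ω.2.2.2.2.2.2.2
end O8

/-- An auxiliary joint law `P_S P_{V|S} P_U P_{U1|U} P_{U2|U} P_{X1|UU1S} P_{X2|UU2S}`
over arbitrary finite auxiliary alphabets. -/
structure AuxLawR1 (A1 A2 AS AY AZ : Type) [Fintype A1] [Fintype A2] [Fintype AS]
    [Fintype AY] [Fintype AZ] where
  V : Type
  U : Type
  U1 : Type
  U2 : Type
  [fV : Fintype V]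
  [fU : Fintype U]
  [fU1 : Fintype U1]
  [fU2 : Fintype U2]
  [dV : DecidableEq V]
  [dU : DecidableEq U]
  [dU1 : DecidableEq U1]
  [dU2 : DecidableEq U2]
  PV : AS → V → ℝ
  PU : U → ℝ
  PU1 : U → U1 → ℝ
  PU2 : U → U2 → ℝ
  PX1 : U → U1 → AS → A1 → ℝ
  PX2 : U → U2 → AS → A2 → ℝ
  hPV : IsKernel PV
  hPU : IsPmf PU
  hPU1 : IsKernel PU1
  hPU2 : IsKernel PU2
  hPX1 : ∀ u u1 s, IsPmf (PX1 u u1 s)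
  hPX2 : ∀ u u2 s, IsPmf (PX2 u u2 s)

attribute [instance] AuxLawR1.fV AuxLawR1.fU AuxLawR1.fU1 AuxLawR1.fU2
  AuxLawR1.dV AuxLawR1.dU AuxLawR1.dU1 AuxLawR1.dU2

/-- An auxiliary joint law `P_S P_U P_{U1|U} P_{U2|U} P_{X1|UU1S} P_{X2|UU2S}` (no lossy
description variable `V`). -/
structure AuxLawD2 (A1 A2 AS AY AZ : Type) [Fintype A1] [Fintype A2] [Fintype AS]
    [Fintype AY] [Fintype AZ] where
  U : Type
  U1 : Type
  U2 : Type
  [fU : Fintype U]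
  [fU1 : Fintype U1]
  [fU2 : Fintype U2]
  [dU : DecidableEq U]
  [dU1 : DecidableEq U1]
  [dU2 : DecidableEq U2]
  PU : U → ℝ
  PU1 : U → U1 → ℝ
  PU2 : U → U2 → ℝ
  PX1 : U → U1 → AS → A1 → ℝ
  PX2 : U → U2 → AS → A2 → ℝ
  hPU : IsPmf PU
  hPU1 : IsKernel PU1
  hPU2 : IsKernel PU2
  hPX1 : ∀ u u1 s, IsPmf (PX1 u u1 s)
  hPX2 : ∀ u u2 s, IsPmf (PX2 u u2 s)

attribute [instance] AuxLawD2.fU AuxLawD2.fU1 AuxLawD2.fU2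
  AuxLawD2.dU AuxLawD2.dU1 AuxLawD2.dU2

/-- An auxiliary joint law `P_S P_{V|S} P_{UU1U2} P_{X1|UU1S} P_{X2|UU2S}` in which
`(V,S)` is independent of `(U,U1,U2)` (the latter with an arbitrary joint pmf). -/
structure AuxLawD3 (A1 A2 AS AY AZ : Type) [Fintype A1] [Fintype A2] [Fintype AS]
    [Fintype AY] [Fintype AZ] where
  V : Type
  U : Type
  U1 : Type
  U2 : Type
  [fV : Fintype V]
  [fU : Fintype U]
  [fU1 : Fintype U1]
  [fU2 : Fintype U2]
  [dV : DecidableEq V]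
  [dU : DecidableEq U]
  [dU1 : DecidableEq U1]
  [dU2 : DecidableEq U2]
  PV : AS → V → ℝ
  PUUU : U × U1 × U2 → ℝ
  PX1 : U → U1 → AS → A1 → ℝ
  PX2 : U → U2 → AS → A2 → ℝ
  hPV : IsKernel PV
  hPUUU : IsPmf PUUU
  hPX1 : ∀ u u1 s, IsPmf (PX1 u u1 s)
  hPX2 : ∀ u u2 s, IsPmf (PX2 u u2 s)

attribute [instance] AuxLawD3.fV AuxLawD3.fU AuxLawD3.fU1 AuxLawD3.fU2
  AuxLawD3.dV AuxLawD3.dU AuxLawD3.dU1 AuxLawD3.dU2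

variable {A1 A2 AS AY AZ : Type} [Fintype A1] [Fintype A2] [Fintype AS]
  [Fintype AY] [Fintype AZ] [DecidableEq A1] [DecidableEq A2] [DecidableEq AS]
  [DecidableEq AY] [DecidableEq AZ]

section AuxD
variable {V U U1 U2 : Type} [Fintype V] [Fintype U] [Fintype U1] [Fintype U2]
  [DecidableEq V] [DecidableEq U] [DecidableEq U1] [DecidableEq U2]

/-- The joint pmf `P_S P_{V|S} P_U P_{U1|U} P_{U2|U} P_{X1|UU1S} P_{X2|UU2S} W`. -/
def jointR1 (PS : AS → ℝ) (W : A1 → A2 → AS → AY × AZ → ℝ) (PV : AS → V → ℝ)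
    (PU : U → ℝ) (PU1 : U → U1 → ℝ) (PU2 : U → U2 → ℝ)
    (PX1 : U → U1 → AS → A1 → ℝ) (PX2 : U → U2 → AS → A2 → ℝ) :
    O9 V U U1 U2 A1 A2 AS AY AZ → ℝ :=
  fun ω => PS ω.s * PV ω.s ω.v * PU ω.u * PU1 ω.u ω.u1 * PU2 ω.u ω.u2 *
    PX1 ω.u ω.u1 ω.s ω.x1 * PX2 ω.u ω.u2 ω.s ω.x2 * W ω.x1 ω.x2 ω.s (ω.y, ω.z)

/-- The joint pmf `P_S P_U P_{U1|U} P_{U2|U} P_{X1|UU1S} P_{X2|UU2S} W`. -/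
def jointD2 (PS : AS → ℝ) (W : A1 → A2 → AS → AY × AZ → ℝ) (PU : U → ℝ)
    (PU1 : U → U1 → ℝ) (PU2 : U → U2 → ℝ) (PX1 : U → U1 → AS → A1 → ℝ)
    (PX2 : U → U2 → AS → A2 → ℝ) : O8 U U1 U2 A1 A2 AS AY AZ → ℝ :=
  fun ω => PS ω.s * PU ω.u * PU1 ω.u ω.u1 * PU2 ω.u ω.u2 *
    PX1 ω.u ω.u1 ω.s ω.x1 * PX2 ω.u ω.u2 ω.s ω.x2 * W ω.x1 ω.x2 ω.s (ω.y, ω.z)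

/-- The joint pmf `P_S P_{V|S} P_{UU1U2} P_{X1|UU1S} P_{X2|UU2S} W`. -/
def jointD3 (PS : AS → ℝ) (W : A1 → A2 → AS → AY × AZ → ℝ) (PV : AS → V → ℝ)
    (PUUU : U × U1 × U2 → ℝ) (PX1 : U → U1 → AS → A1 → ℝ)
    (PX2 : U → U2 → AS → A2 → ℝ) : O9 V U U1 U2 A1 A2 AS AY AZ → ℝ :=
  fun ω => PS ω.s * PV ω.s ω.v * PUUU (ω.u, ω.u1, ω.u2) *
    PX1 ω.u ω.u1 ω.s ω.x1 * PX2 ω.u ω.u2 ω.s ω.x2 * W ω.x1 ω.x2 ω.s (ω.y, ω.z)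

/-- The secret-key rate `R_SK = I(V;Y) - I(V;Z,U,U2)`. -/
def RSKD (p : O9 V U U1 U2 A1 A2 AS AY AZ → ℝ) : ℝ :=
  MI p (fun ω => ω.v) (fun ω => ω.y) - MI p (fun ω => ω.v) (fun ω => (ω.z, ω.u, ω.u2))

/-- The region `R^{CSI-E}_{D,11}` for one auxiliary law. -/
def regionD11 (p : O9 V U U1 U2 A1 A2 AS AY AZ → ℝ) : Set (ℝ × ℝ) :=
  {R | 0 ≤ R.1 ∧ 0 ≤ R.2 ∧
    R.2 ≤ min (cMI p (fun ω => ω.u1) (fun ω => ω.y) (fun ω => (ω.u, ω.u2, ω.v)) -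
        cMI p (fun ω => ω.u1) (fun ω => ω.z) (fun ω => (ω.u2, ω.u, ω.s)) + RSKD p)
      (cMI p (fun ω => ω.u1) (fun ω => ω.y) (fun ω => (ω.u, ω.u2, ω.v))) ∧
    R.1 + R.2 ≤ min (MI p (fun ω => (ω.v, ω.u, ω.u1, ω.u2)) (fun ω => ω.y) -
        MI p (fun ω => ω.v) (fun ω => ω.s) -
        cMI p (fun ω => ω.u1) (fun ω => ω.z) (fun ω => (ω.u2, ω.u, ω.s)) + RSKD p)
      (MI p (fun ω => (ω.v, ω.u, ω.u1, ω.u2)) (fun ω => ω.y) -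
        MI p (fun ω => ω.v) (fun ω => ω.s))}

/-- The region `R^{CSI-E}_{D,12}` for one auxiliary law. -/
def regionD12 (p : O9 V U U1 U2 A1 A2 AS AY AZ → ℝ) : Set (ℝ × ℝ) :=
  {R | 0 ≤ R.1 ∧ 0 ≤ R.2 ∧
    R.2 ≤ min (RSKD p)
      (cMI p (fun ω => ω.u1) (fun ω => ω.y) (fun ω => (ω.u, ω.u2, ω.v))) ∧
    R.1 + R.2 ≤ MI p (fun ω => (ω.v, ω.u, ω.u1, ω.u2)) (fun ω => ω.y) -
      MI p (fun ω => ω.v) (fun ω => ω.s)}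

/-- The region `R^{CSI-E}_{D,21}` for one auxiliary law. -/
def regionD21 (p : O8 U U1 U2 A1 A2 AS AY AZ → ℝ) : Set (ℝ × ℝ) :=
  {R | 0 ≤ R.1 ∧ 0 ≤ R.2 ∧
    R.2 ≤ min (cMI p (fun ω => ω.u1) (fun ω => ω.y) (fun ω => (ω.u, ω.u2)) -
        cMI p (fun ω => ω.u1) (fun ω => ω.z) (fun ω => (ω.u2, ω.u, ω.s)) -
        Hc p (fun ω => ω.s) (fun ω => (ω.u, ω.u1, ω.u2, ω.y)) +
        Hc p (fun ω => ω.s) (fun ω => (ω.z, ω.u, ω.u2)))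
      (cMI p (fun ω => ω.u1) (fun ω => ω.y) (fun ω => (ω.u, ω.u2)) -
        Hc p (fun ω => ω.s) (fun ω => (ω.u, ω.u1, ω.u2, ω.y))) ∧
    R.1 + R.2 ≤ min (MI p (fun ω => (ω.u, ω.u1, ω.u2)) (fun ω => ω.y) -
        cMI p (fun ω => ω.u1) (fun ω => ω.z) (fun ω => (ω.u2, ω.u, ω.s)) -
        Hc p (fun ω => ω.s) (fun ω => (ω.u, ω.u1, ω.u2, ω.y)) +
        Hc p (fun ω => ω.s) (fun ω => (ω.z, ω.u, ω.u2)))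
      (MI p (fun ω => (ω.u, ω.u1, ω.u2)) (fun ω => ω.y) -
        Hc p (fun ω => ω.s) (fun ω => (ω.u, ω.u1, ω.u2, ω.y)))}

/-- The region `R^{CSI-E}_{D,22}` for one auxiliary law. -/
def regionD22 (p : O8 U U1 U2 A1 A2 AS AY AZ → ℝ) : Set (ℝ × ℝ) :=
  {R | 0 ≤ R.1 ∧ 0 ≤ R.2 ∧
    R.2 ≤ min (Hc p (fun ω => ω.s) (fun ω => (ω.z, ω.u, ω.u2)) -
        Hc p (fun ω => ω.s) (fun ω => (ω.u, ω.u1, ω.u2, ω.y)))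
      (cMI p (fun ω => ω.u1) (fun ω => ω.y) (fun ω => (ω.u, ω.u2)) -
        Hc p (fun ω => ω.s) (fun ω => (ω.u, ω.u1, ω.u2, ω.y))) ∧
    R.1 + R.2 ≤ MI p (fun ω => (ω.u, ω.u1, ω.u2)) (fun ω => ω.y) -
      Hc p (fun ω => ω.s) (fun ω => (ω.u, ω.u1, ω.u2, ω.y))}

/-- The wiretap-coding region `R^{CSI-E}_{D,3}` for one auxiliary law. -/
def regionD3 (p : O9 V U U1 U2 A1 A2 AS AY AZ → ℝ) : Set (ℝ × ℝ) :=
  {R | 0 ≤ R.1 ∧ 0 ≤ R.2 ∧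
    R.2 ≤ cMI p (fun ω => ω.u1) (fun ω => ω.y) (fun ω => (ω.u, ω.u2, ω.v)) -
      cMI p (fun ω => ω.u1) (fun ω => ω.z) (fun ω => (ω.u2, ω.u)) ∧
    R.1 + R.2 ≤ MI p (fun ω => (ω.v, ω.u, ω.u1, ω.u2)) (fun ω => ω.y) -
      MI p (fun ω => ω.v) (fun ω => ω.s) -
      cMI p (fun ω => ω.u1) (fun ω => ω.z) (fun ω => (ω.u2, ω.u))}

end AuxD

/-- The joint law determined by an `AuxLawR1` datum. -/
def AuxLawR1.joint (L : AuxLawR1 A1 A2 AS AY AZ) (PS : AS → ℝ)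
    (W : A1 → A2 → AS → AY × AZ → ℝ) : O9 L.V L.U L.U1 L.U2 A1 A2 AS AY AZ → ℝ :=
  jointR1 PS W L.PV L.PU L.PU1 L.PU2 L.PX1 L.PX2

/-- The joint law determined by an `AuxLawD2` datum. -/
def AuxLawD2.joint (L : AuxLawD2 A1 A2 AS AY AZ) (PS : AS → ℝ)
    (W : A1 → A2 → AS → AY × AZ → ℝ) : O8 L.U L.U1 L.U2 A1 A2 AS AY AZ → ℝ :=
  jointD2 PS W L.PU L.PU1 L.PU2 L.PX1 L.PX2

/-- The joint law determined by an `AuxLawD3` datum. -/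
def AuxLawD3.joint (L : AuxLawD3 A1 A2 AS AY AZ) (PS : AS → ℝ)
    (W : A1 → A2 → AS → AY × AZ → ℝ) : O9 L.V L.U L.U1 L.U2 A1 A2 AS AY AZ → ℝ :=
  jointD3 PS W L.PV L.PUUU L.PX1 L.PX2

/-- The region `R^{CSI-E}_{D,11}` (union over auxiliary laws). -/
def RegionD11 (PS : AS → ℝ) (W : A1 → A2 → AS → AY × AZ → ℝ) : Set (ℝ × ℝ) :=
  {R | ∃ L : AuxLawR1 A1 A2 AS AY AZ, R ∈ regionD11 (L.joint PS W)}

/-- The region `R^{CSI-E}_{D,12}` (union over auxiliary laws). -/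
def RegionD12 (PS : AS → ℝ) (W : A1 → A2 → AS → AY × AZ → ℝ) : Set (ℝ × ℝ) :=
  {R | ∃ L : AuxLawR1 A1 A2 AS AY AZ, R ∈ regionD12 (L.joint PS W)}

/-- The region `R^{CSI-E}_{D,21}` (union over auxiliary laws). -/
def RegionD21 (PS : AS → ℝ) (W : A1 → A2 → AS → AY × AZ → ℝ) : Set (ℝ × ℝ) :=
  {R | ∃ L : AuxLawD2 A1 A2 AS AY AZ, R ∈ regionD21 (L.joint PS W)}

/-- The region `R^{CSI-E}_{D,22}` (union over auxiliary laws). -/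
def RegionD22 (PS : AS → ℝ) (W : A1 → A2 → AS → AY × AZ → ℝ) : Set (ℝ × ℝ) :=
  {R | ∃ L : AuxLawD2 A1 A2 AS AY AZ, R ∈ regionD22 (L.joint PS W)}

/-- The region `R^{CSI-E}_{D,3}` (union over auxiliary laws). -/
def RegionD3 (PS : AS → ℝ) (W : A1 → A2 → AS → AY × AZ → ℝ) : Set (ℝ × ℝ) :=
  {R | ∃ L : AuxLawD3 A1 A2 AS AY AZ, R ∈ regionD3 (L.joint PS W)}

/-- The `Pr{S=1} = 0.8` state pmf on `Bool`. -/
def PS08 : Bool → ℝ := fun s => if s then 0.8 else 0.2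

/-- The deterministic channel of Example 2: `Y = X1` if `S = 0`, `Y = X2` if `S = 1`, and
`Z = X1`. -/
def Wex3 : Bool → Bool → Bool → Bool × Bool → ℝ :=
  fun x1 x2 s yz => if yz.1 = cond s x2 x1 ∧ yz.2 = x1 then 1 else 0

/-! ### Entropy of finite laws -/

lemma ent_eq {α : Type*} [Fintype α] (p : α → ℝ) :
    ent p = (∑ a, Real.negMulLog (p a)) / Real.log 2 := by
  simp only [ent, Real.negMulLog, Real.logb, Finset.sum_div, ← Finset.sum_neg_distrib]
  exact Finset.sum_congr rfl fun a _ => by ring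

lemma ent_comp_equiv {α β : Type*} [Fintype α] [Fintype β] (p : β → ℝ) (e : α ≃ β) :
    ent (fun a => p (e a)) = ent p := by
  simp only [ent]
  rw [Equiv.sum_comp e (fun b => p b * Real.logb 2 (p b))]

lemma ent_chain {α β : Type*} [Fintype α] [Fintype β] (q : α → ℝ) (k : α → β → ℝ)
    (hk : ∀ a, ∑ b, k a b = 1) :
    ent (fun x : α × β => q x.1 * k x.1 x.2) = ent q + ∑ a, q a * ent (k a) := by
  simp only [ent_eq, Fintype.sum_prod_type, Real.negMulLog_mul, Finset.sum_add_distrib,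
    ← Finset.sum_mul, ← Finset.mul_sum, hk, one_mul, mul_div_assoc', ← Finset.sum_div,
    add_div]

lemma ent_concave {α β : Type*} [Fintype α] [Fintype β] (r : α → ℝ) (k : α → β → ℝ)
    (hr : IsPmf r) (hk : ∀ a b, 0 ≤ k a b) :
    ∑ a, r a * ent (k a) ≤ ent (fun b => ∑ a, r a * k a b) := by
  simp only [ent_eq, mul_div_assoc', ← Finset.sum_div]
  refine div_le_div_of_nonneg_right ?_ (Real.log_nonneg (by norm_num))
  simp only [Finset.mul_sum]
  rw [Finset.sum_comm]
  refine Finset.sum_le_sum fun b _ => ?_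
  have := Real.concaveOn_negMulLog.le_map_sum (t := Finset.univ) (w := r)
    (p := fun a => k a b) (fun a _ => hr.1 a) hr.2 (fun a _ => hk a b)
  simpa [smul_eq_mul] using this

lemma ent_nonneg {α : Type*} [Fintype α] (p : α → ℝ) (hp : IsPmf p) : 0 ≤ ent p := by
  rw [ent_eq]
  refine div_nonneg (Finset.sum_nonneg fun a _ => Real.negMulLog_nonneg (hp.1 a) ?_)
    (Real.log_nonneg (by norm_num))
  rw [← hp.2]
  exact Finset.single_le_sum (fun b _ => hp.1 b) (Finset.mem_univ a)

lemma law_comp {Ω α β : Type*} [Fintype Ω] [Fintype α] [DecidableEq α] [DecidableEq β]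
    (p : Ω → ℝ) (X : Ω → α) (f : α → β) :
    law p (fun ω => f (X ω)) = law (law p X) f := by
  funext b
  simp only [law]
  have : ∀ a, (if f a = b then ∑ ω, (if X ω = a then p ω else 0) else 0) =
      ∑ ω, if X ω = a then (if f (X ω) = b then p ω else 0) else 0 := by
    intro a
    split_ifs with h
    · refine Finset.sum_congr rfl fun ω _ => ?_
      split_ifs with h1 h2 <;> simp_all
    · symm
      refine Finset.sum_eq_zero fun ω _ => ?_
      split_ifs with h1 h2 <;> simp_all
  simp only [this]
  rw [Finset.sum_comm]
  simp

lemma H_comp {Ω α β : Type*} [Fintype Ω] [Fintype α] [Fintype β] [DecidableEq α]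
    [DecidableEq β] (p : Ω → ℝ) (X : Ω → α) (f : α → β) :
    H p (fun ω => f (X ω)) = H (law p X) f := by
  simp only [H, law_comp]

lemma law_equiv {Ω α β : Type*} [Fintype Ω] [DecidableEq α]
    [DecidableEq β] (p : Ω → ℝ) (X : Ω → α) (e : α ≃ β) :
    law p (fun ω => e (X ω)) = fun b => law p X (e.symm b) := by
  funext b
  simp only [law, Equiv.eq_symm_apply]

/-- Entropy is invariant under relabelling. -/
lemma H_equiv {Ω α β : Type*} [Fintype Ω] [Fintype α] [Fintype β] [DecidableEq α]
    [DecidableEq β] (p : Ω → ℝ) (X : Ω → α) (e : α ≃ β) :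
    H p (fun ω => e (X ω)) = H p X := by
  rw [H, law_equiv, ent_comp_equiv]; rfl

lemma law_snd {Ω α β : Type*} [Fintype Ω] [Fintype α] [DecidableEq α]
    [DecidableEq β] (p : Ω → ℝ) (X : Ω → α) (Y : Ω → β) (b : β) :
    law p Y b = ∑ a, law p (fun ω => (X ω, Y ω)) (a, b) := by
  simp only [law, Prod.mk.injEq, ite_and]
  rw [Finset.sum_comm]
  simp

lemma law_fst {Ω α β : Type*} [Fintype Ω] [Fintype β] [DecidableEq α]
    [DecidableEq β] (p : Ω → ℝ) (X : Ω → α) (Y : Ω → β) (a : α) :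
    law p X a = ∑ b, law p (fun ω => (X ω, Y ω)) (a, b) := by
  simp only [law, Prod.mk.injEq, ite_and]
  rw [Finset.sum_comm]
  refine Finset.sum_congr rfl fun ω _ => ?_
  split_ifs <;> simp

/-- Chain rule, for a pair whose joint law is given as `q(a) k(b|a)`. -/
lemma H_pair {Ω α β : Type*} [Fintype Ω] [Fintype α] [Fintype β] [DecidableEq α]
    [DecidableEq β] (p : Ω → ℝ) (A : Ω → α) (B : Ω → β) (q : α → ℝ) (k : α → β → ℝ)
    (h : ∀ a b, law p (fun ω => (A ω, B ω)) (a, b) = q a * k a b)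
    (hk : ∀ a, ∑ b, k a b = 1) :
    H p A = ent q ∧ H p (fun ω => (A ω, B ω)) = ent q + ∑ a, q a * ent (k a) := by
  constructor
  · rw [H]; congr 1; funext a
    rw [law_fst p A B, Finset.sum_congr rfl fun b _ => h a b, ← Finset.mul_sum, hk, mul_one]
  · rw [H, ← ent_chain q k hk]; congr 1; funext x; exact h x.1 x.2

lemma H_pair_indep {Ω α β : Type*} [Fintype Ω] [Fintype α] [Fintype β] [DecidableEq α]
    [DecidableEq β] (p : Ω → ℝ) (A : Ω → α) (B : Ω → β) (q : α → ℝ) (k : β → ℝ)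
    (h : ∀ a b, law p (fun ω => (A ω, B ω)) (a, b) = q a * k b)
    (hq : ∑ a, q a = 1) (hk : ∑ b, k b = 1) :
    H p (fun ω => (A ω, B ω)) = H p A + H p B := by
  have h1 := H_pair p A B q (fun _ => k) h (fun _ => hk)
  have h2 : H p B = ent k := by
    rw [H]; congr 1; funext b
    rw [law_snd p A B]
    simp only [h, ← Finset.sum_mul, hq, one_mul]
  rw [h1.1, h1.2, h2, ← Finset.sum_mul, hq, one_mul]

/-- If `(C, A, B)` has law `q(c) r(a|c) k(b|c,a)`, then `I(A;B|C)` is the `q`-average of the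
Jensen gap of entropy for the mixture of the `k(·|c,a)` with weights `r(·|c)`. -/
lemma cMI_eq {Ω α β γ : Type*} [Fintype Ω] [Fintype α] [Fintype β] [Fintype γ]
    [DecidableEq α] [DecidableEq β] [DecidableEq γ] (p : Ω → ℝ) (A : Ω → α)
    (B : Ω → β) (C : Ω → γ) (q : γ → ℝ) (r : γ → α → ℝ) (k : γ → α → β → ℝ)
    (h : ∀ c a b, law p (fun ω => ((C ω, A ω), B ω)) ((c, a), b) = q c * r c a * k c a b)
    (hr : ∀ c, ∑ a, r c a = 1) (hk : ∀ c a, ∑ b, k c a b = 1) :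
    cMI p A B C = ∑ c, q c * (ent (fun b => ∑ a, r c a * k c a b) -
      ∑ a, r c a * ent (k c a)) := by
  have h1 := H_pair p (fun ω => (C ω, A ω)) B (fun x => q x.1 * r x.1 x.2)
    (fun x => k x.1 x.2) (fun x b => h x.1 x.2 b) (fun x => hk x.1 x.2)
  have h2 := H_pair p C B q (fun c b => ∑ a, r c a * k c a b) (fun c b => by
      rw [law_snd p A (fun ω => (C ω, B ω)), Finset.mul_sum]
      refine Finset.sum_congr rfl fun a _ => ?_
      rw [← mul_assoc, ← h]
      simp only [law, Prod.mk.injEq]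
      refine Finset.sum_congr rfl fun ω _ => if_congr (by tauto) rfl rfl)
    (fun c => by
      rw [Finset.sum_comm]; simp only [← Finset.mul_sum, hk, mul_one, hr])
  have e1 : H p (fun ω => (A ω, C ω)) = H p (fun ω => (C ω, A ω)) :=
    H_equiv p (fun ω => (C ω, A ω)) (Equiv.prodComm _ _)
  have e2 : H p (fun ω => (B ω, C ω)) = H p (fun ω => (C ω, B ω)) :=
    H_equiv p (fun ω => (C ω, B ω)) (Equiv.prodComm _ _)
  have e3 : H p (fun ω => (A ω, B ω, C ω)) = H p (fun ω => ((C ω, A ω), B ω)) :=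
    H_equiv p (fun ω => ((C ω, A ω), B ω))
      ⟨fun x => (x.1.2, x.2, x.1.1), fun x => ((x.2.2, x.1), x.2.1), fun _ => rfl, fun _ => rfl⟩
  have h3 := ent_chain q r hr
  rw [cMI, Hc, Hc, e1, e2, e3, h1.1, h1.2, h2.1, h2.2]
  simp only [mul_sub, Finset.sum_sub_distrib, Fintype.sum_prod_type, Finset.mul_sum, mul_assoc]
  ring

lemma cMI_nonneg_of_kernel {Ω α β γ : Type*} [Fintype Ω] [Fintype α] [Fintype β] [Fintype γ]
    [DecidableEq α] [DecidableEq β] [DecidableEq γ] (p : Ω → ℝ) (A : Ω → α)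
    (B : Ω → β) (C : Ω → γ) (q : γ → ℝ) (r : γ → α → ℝ) (k : γ → α → β → ℝ)
    (h : ∀ c a b, law p (fun ω => ((C ω, A ω), B ω)) ((c, a), b) = q c * r c a * k c a b)
    (hq : ∀ c, 0 ≤ q c) (hr : ∀ c, IsPmf (r c)) (hk : ∀ c a, IsPmf (k c a)) :
    0 ≤ cMI p A B C := by
  rw [cMI_eq p A B C q r k h (fun c => (hr c).2) (fun c a => (hk c a).2)]
  exact Finset.sum_nonneg fun c _ => mul_nonneg (hq c)
    (sub_nonneg.2 (ent_concave _ _ (hr c) fun a => (hk c a).1))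

lemma law_nonneg {Ω α : Type*} [Fintype Ω] [DecidableEq α] (p : Ω → ℝ) (hp : ∀ ω, 0 ≤ p ω)
    (X : Ω → α) (a : α) : 0 ≤ law p X a :=
  Finset.sum_nonneg fun ω _ => by split_ifs <;> simp [hp]

lemma Hc_nonneg {Ω α β : Type*} [Fintype Ω] [Fintype α] [Fintype β] [DecidableEq α]
    [DecidableEq β] (p : Ω → ℝ) (hp : ∀ ω, 0 ≤ p ω) (X : Ω → α) (Y : Ω → β) :
    0 ≤ Hc p X Y := by
  rw [Hc, H, H, sub_nonneg, ent, ent, neg_le_neg_iff, Fintype.sum_prod_type_right]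
  refine Finset.sum_le_sum fun b _ => ?_
  rw [law_snd p X Y b, Finset.sum_mul]
  refine Finset.sum_le_sum fun a _ => ?_
  rcases (law_nonneg p hp (fun ω => (X ω, Y ω)) (a, b)).eq_or_lt with h | h
  · simp [← h]
  · refine mul_le_mul_of_nonneg_left (Real.logb_le_logb_of_le (by norm_num) h ?_) h.le
    exact Finset.single_le_sum (f := fun a => law p (fun ω => (X ω, Y ω)) (a, b))
      (fun a _ => law_nonneg p hp _ _) (Finset.mem_univ a)

/-! ### Binary entropy inequalities -/

lemma negMulLog_add_le (x y : ℝ) (hx : 0 ≤ x) (hy : 0 ≤ y) :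
    Real.negMulLog (x + y) ≤ Real.negMulLog x + Real.negMulLog y := by
  rcases hx.eq_or_lt with rfl | hx'
  · simp
  rcases hy.eq_or_lt with rfl | hy'
  · simp
  have h1 := mul_le_mul_of_nonneg_left (Real.log_le_log hx' (by linarith : x ≤ x + y)) hx
  have h2 := mul_le_mul_of_nonneg_left (Real.log_le_log hy' (by linarith : y ≤ x + y)) hy
  simp only [Real.negMulLog]
  linarith

lemma binEntropy_fifth : Real.binEntropy (1 / 5) = Real.log 5 - 8 / 5 * Real.log 2 := by
  have h4 : Real.log 4 = 2 * Real.log 2 := by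
    rw [show (4 : ℝ) = 2 ^ 2 by norm_num, Real.log_pow]; norm_num
  rw [Real.binEntropy_eq_negMulLog_add_negMulLog_one_sub, Real.negMulLog, Real.negMulLog,
    show (1 : ℝ) - 1 / 5 = 4 / 5 by norm_num, Real.log_div (by norm_num) (by norm_num),
    Real.log_div (by norm_num) (by norm_num), h4, Real.log_one]
  ring

lemma binEntropy_mix_le_half (a b : ℝ) (ha0 : 0 ≤ a) (ha1 : a ≤ 1) (hb0 : 0 ≤ b)
    (hb1 : b ≤ 1 / 2) :
    Real.binEntropy (1 / 5 * a + 4 / 5 * b) ≤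
      Real.binEntropy (1 / 5) + 4 / 5 * Real.binEntropy b := by
  by_cases hb : b ≤ 3 / 8
  · have h1 : Real.binEntropy (1 / 5 * a + 4 / 5 * b) ≤ Real.binEntropy (1 / 5 + 4 / 5 * b) :=
      Real.binEntropy_strictMonoOn.monotoneOn ⟨by linarith, by linarith⟩
        ⟨by linarith, by linarith⟩ (by linarith)
    refine h1.trans ?_
    have h2 := negMulLog_add_le (1 / 5) (4 / 5 * b) (by norm_num) (by linarith)
    simp only [Real.binEntropy_eq_negMulLog_add_negMulLog_one_sub]
    rw [show 1 - (1 / 5 + 4 / 5 * b) = 4 / 5 * (1 - b) by ring, Real.negMulLog_mul _ (1 - b),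
      show (1 : ℝ) - 1 / 5 = 4 / 5 by norm_num]
    rw [Real.negMulLog_mul] at h2
    linarith
  · have h1 : Real.binEntropy (1 / 5) ≤ Real.binEntropy b :=
      Real.binEntropy_strictMonoOn.monotoneOn ⟨by norm_num, by norm_num⟩
        ⟨by linarith, by linarith⟩ (by linarith)
    have h2 : Real.binEntropy (1 / 5 * a + 4 / 5 * b) ≤ Real.log 2 :=
      Real.binEntropy_le_log_two
    have h3 : 9 * Real.log 2 ≤ 4 * Real.log 5 := by
      have := Real.log_le_log (x := 2 ^ 9) (y := 5 ^ 4) (by norm_num) (by norm_num)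
      rw [Real.log_pow, Real.log_pow] at this
      exact_mod_cast this
    have h4 : 0 < Real.log 2 := Real.log_pos (by norm_num)
    rw [binEntropy_fifth] at h1 ⊢
    linarith

/-- A mixture `Y` of two binary laws with weights `1/5`, `4/5` has entropy at most
`h(1/5) + (4/5) h(b)`. If the weight-`4/5` law is far from uniform, replacing the other law by
the extreme one closest to `1/2` reduces this to `H(Y) ≤ H(S,Y)`; if it is nearly uniform the
right side exceeds one bit. -/
lemma binEntropy_mix_le (a b : ℝ) (ha0 : 0 ≤ a) (ha1 : a ≤ 1) (hb0 : 0 ≤ b) (hb1 : b ≤ 1) :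
    Real.binEntropy (1 / 5 * a + 4 / 5 * b) ≤
      Real.binEntropy (1 / 5) + 4 / 5 * Real.binEntropy b := by
  by_cases hb : b ≤ 1 / 2
  · exact binEntropy_mix_le_half a b ha0 ha1 hb0 hb
  · have h := binEntropy_mix_le_half (1 - a) (1 - b) (by linarith) (by linarith) (by linarith)
      (by linarith)
    rwa [show 1 / 5 * (1 - a) + 4 / 5 * (1 - b) = 1 - (1 / 5 * a + 4 / 5 * b) by ring,
      Real.binEntropy_one_sub, Real.binEntropy_one_sub] at h

lemma ent_bool (p : Bool → ℝ) (hp : ∑ b, p b = 1) :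
    ent p = Real.binEntropy (p true) / Real.log 2 := by
  rw [Fintype.sum_bool] at hp
  rw [ent_eq, Fintype.sum_bool, Real.binEntropy_eq_negMulLog_add_negMulLog_one_sub,
    show p false = 1 - p true by linarith]

lemma isPmf_PS08 : IsPmf PS08 := by
  constructor
  · intro s; cases s <;> norm_num [PS08]
  · norm_num [PS08]

lemma IsPmf.mix {α β : Type*} [Fintype α] [Fintype β] {r : α → ℝ} {k : α → β → ℝ}
    (hr : IsPmf r) (hk : ∀ a, IsPmf (k a)) : IsPmf (fun b => ∑ a, r a * k a b) := by
  refine ⟨fun b => Finset.sum_nonneg fun a _ => mul_nonneg (hr.1 a) ((hk a).1 b), ?_⟩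
  rw [Finset.sum_comm]
  simp only [← Finset.mul_sum, (hk _).2, mul_one, hr.2]

lemma ent_mix_le (α β : Bool → ℝ) (hα : IsPmf α) (hβ : IsPmf β) :
    ent (fun y => PS08 false * α y + PS08 true * β y) ≤ ent PS08 + PS08 true * ent β := by
  have hm : ∑ y, (PS08 false * α y + PS08 true * β y) = 1 := by
    rw [Finset.sum_add_distrib, ← Finset.mul_sum, ← Finset.mul_sum, hα.2, hβ.2]
    norm_num [PS08]
  rw [ent_bool _ hm, ent_bool _ hβ.2, ent_bool _ isPmf_PS08.2]
  have ha := hα.2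
  have hb := hβ.2
  rw [Fintype.sum_bool] at ha hb
  have h := binEntropy_mix_le (α true) (β true) (hα.1 _) (by linarith [hα.1 false])
    (hβ.1 _) (by linarith [hβ.1 false])
  have e1 : PS08 true = 4 / 5 := by norm_num [PS08]
  have e2 : PS08 false = 1 / 5 := by norm_num [PS08]
  rw [e1, e2, show (4 / 5 : ℝ) = 1 - 1 / 5 by norm_num, Real.binEntropy_one_sub]
  rw [show (4 / 5 : ℝ) = 1 - 1 / 5 by norm_num] at h
  rw [mul_div_assoc', ← add_div]
  exact div_le_div_of_nonneg_right h (Real.log_nonneg (by norm_num))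

/-! ### Laws of the outputs -/

/-- The conditional law of `Y` given `(U, U1, U2, S)` in the channel `Wex3`. -/
def KY (L : AuxLawD2 Bool Bool Bool Bool Bool) (u : L.U) (u1 : L.U1) (u2 : L.U2) (s : Bool) :
    Bool → ℝ :=
  if s then L.PX2 u u2 true else L.PX1 u u1 false

lemma isPmf_KY (L : AuxLawD2 Bool Bool Bool Bool Bool) (u : L.U) (u1 : L.U1) (u2 : L.U2)
    (s : Bool) : IsPmf (KY L u u1 u2 s) := by
  cases s
  · exact L.hPX1 u u1 false
  · exact L.hPX2 u u2 true

lemma law_Y (L : AuxLawD2 Bool Bool Bool Bool Bool) (c : Bool × L.U × L.U2) (u1 : L.U1)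
    (y : Bool) :
    law (L.joint PS08 Wex3) (fun ω => (((ω.s, ω.u, ω.u2), ω.u1), ω.y)) ((c, u1), y) =
      (PS08 c.1 * (L.PU c.2.1 * L.PU2 c.2.1 c.2.2)) * L.PU1 c.2.1 u1 *
        KY L c.2.1 u1 c.2.2 c.1 y := by
  obtain ⟨s, u, u2⟩ := c
  have h1 := (L.hPX1 u u1 s).2
  have h2 := (L.hPX2 u u2 s).2
  rw [Fintype.sum_bool] at h1 h2
  simp only [law, AuxLawD2.joint, jointD2, O8.s, O8.u, O8.u1, O8.u2, O8.y, O8.x1, O8.x2, O8.z,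
    Fintype.sum_prod_type, Prod.mk.injEq, ite_and, Finset.sum_ite_irrel, Finset.sum_const_zero,
    Finset.sum_ite_eq', Finset.mem_univ, if_true]
  cases s <;> cases y <;>
    simp [Wex3, KY, Finset.sum_ite_irrel, ← mul_add]
  · rw [h2]; ring
  · rw [h2]; ring
  · rw [← add_mul, ← mul_add, h1]; ring
  · rw [← add_mul, ← mul_add, h1]; ring

lemma law_Z (L : AuxLawD2 Bool Bool Bool Bool Bool) (c : Bool × L.U × L.U2) (u1 : L.U1)
    (z : Bool) :
    law (L.joint PS08 Wex3) (fun ω => (((ω.s, ω.u, ω.u2), ω.u1), ω.z)) ((c, u1), z) =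
      (PS08 c.1 * (L.PU c.2.1 * L.PU2 c.2.1 c.2.2)) * L.PU1 c.2.1 u1 *
        L.PX1 c.2.1 u1 c.1 z := by
  obtain ⟨s, u, u2⟩ := c
  have h1 := (L.hPX1 u u1 s).2
  have h2 := (L.hPX2 u u2 s).2
  rw [Fintype.sum_bool] at h1 h2
  simp only [law, AuxLawD2.joint, jointD2, O8.s, O8.u, O8.u1, O8.u2, O8.y, O8.x1, O8.x2, O8.z,
    Fintype.sum_prod_type, Prod.mk.injEq, ite_and, Finset.sum_ite_irrel, Finset.sum_const_zero,
    Finset.sum_ite_eq', Finset.mem_univ, if_true]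
  cases s <;> cases z <;>
    simp [Wex3, Finset.sum_ite_irrel, ← mul_add]
  all_goals rw [h2]; ring

/-! ### Comparison of the two receivers -/

/-- `I(U1;Y|S,U,U2) ≤ I(U1;Z|S,U,U2)` for scheme-2 laws. -/
lemma jensen_part (L : AuxLawD2 Bool Bool Bool Bool Bool) :
    cMI (L.joint PS08 Wex3) (fun ω => ω.u1) (fun ω => ω.y) (fun ω => (ω.s, ω.u, ω.u2)) ≤
      cMI (L.joint PS08 Wex3) (fun ω => ω.u1) (fun ω => ω.z) (fun ω => (ω.s, ω.u, ω.u2)) := by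
  rw [cMI_eq _ _ _ _ _ (fun c => L.PU1 c.2.1) (fun c u1 => KY L c.2.1 u1 c.2.2 c.1) (law_Y L)
      (fun c => (L.hPU1 _).2) (fun c u1 => (isPmf_KY L _ _ _ _).2),
    cMI_eq _ _ _ _ _ (fun c => L.PU1 c.2.1) (fun c u1 => L.PX1 c.2.1 u1 c.1) (law_Z L)
      (fun c => (L.hPU1 _).2) (fun c u1 => (L.hPX1 _ _ _).2)]
  refine Finset.sum_le_sum fun c _ => ?_
  obtain ⟨s, u, u2⟩ := c
  refine mul_le_mul_of_nonneg_left ?_ (mul_nonneg (isPmf_PS08.1 _)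
    (mul_nonneg (L.hPU.1 _) ((L.hPU2 _).1 _)))
  -- For `S = 0` both outputs equal `X1`; for `S = 1` the law of `Y = X2` does not depend on
  -- `u1`, so the Jensen gap of `Y` vanishes.
  cases s
  · exact le_rfl
  · have h := ent_concave (L.PU1 u) (fun u1 => L.PX1 u u1 true) (L.hPU1 u)
      (fun u1 => (L.hPX1 u u1 true).1)
    simp only [KY, if_true, ← Finset.sum_mul, (L.hPU1 u).2, one_mul, sub_self]
    linarith

/-! ### Rates of scheme 2 -/

lemma law_SY (L : AuxLawD2 Bool Bool Bool Bool Bool) (c : L.U × L.U2) (u1 : L.U1)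
    (t : Bool × Bool) :
    law (L.joint PS08 Wex3) (fun ω => (((ω.u, ω.u2), ω.u1), (ω.s, ω.y))) ((c, u1), t) =
      L.PU c.1 * L.PU2 c.1 c.2 * L.PU1 c.1 u1 * (PS08 t.1 * KY L c.1 u1 c.2 t.1 t.2) := by
  have h := law_Y L (t.1, c.1, c.2) u1 t.2
  have e : law (L.joint PS08 Wex3) (fun ω => (((ω.u, ω.u2), ω.u1), (ω.s, ω.y))) ((c, u1), t) =
      law (L.joint PS08 Wex3) (fun ω => (((ω.s, ω.u, ω.u2), ω.u1), ω.y))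
        (((t.1, c.1, c.2), u1), t.2) := by
    obtain ⟨u, u2⟩ := c
    obtain ⟨s, y⟩ := t
    simp only [law, Prod.mk.injEq]
    exact Finset.sum_congr rfl fun ω _ => if_congr (by tauto) rfl rfl
  rw [e, h]
  ring

lemma law_Y_marginal (L : AuxLawD2 Bool Bool Bool Bool Bool) (c : L.U × L.U2) (u1 : L.U1)
    (y : Bool) :
    law (L.joint PS08 Wex3) (fun ω => (((ω.u, ω.u2), ω.u1), ω.y)) ((c, u1), y) =
      L.PU c.1 * L.PU2 c.1 c.2 * L.PU1 c.1 u1 * ∑ s, PS08 s * KY L c.1 u1 c.2 s y := by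
  rw [law_snd _ (fun ω => ω.s), Finset.mul_sum]
  refine Finset.sum_congr rfl fun s _ => ?_
  rw [← law_SY L c u1 (s, y)]
  simp only [law, Prod.mk.injEq]
  exact Finset.sum_congr rfl fun ω _ => if_congr (by tauto) rfl rfl

lemma isPmf_KY_marginal (L : AuxLawD2 Bool Bool Bool Bool Bool) (u : L.U) (u1 : L.U1)
    (u2 : L.U2) : IsPmf (fun y => ∑ s, PS08 s * KY L u u1 u2 s y) :=
  isPmf_PS08.mix fun s => isPmf_KY L u u1 u2 s

/-- The second bound on `R1` in scheme 2 is never positive. Since `S` is independent of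
`(U, U1, U2)`, it equals `H(Y|U,U2) - H(S) - H(Y|S,U,U1,U2)`, and dropping the `S = 0` part of the
last term leaves at most `H(Y|U,U2) - H(S) - 0.8 H(X2|U,U2,S=1)`, which `ent_mix_le` bounds by `0`
for each value of `(U, U2)`. -/
lemma secrecy_rate_nonpos (L : AuxLawD2 Bool Bool Bool Bool Bool) :
    cMI (L.joint PS08 Wex3) (fun ω => ω.u1) (fun ω => ω.y) (fun ω => (ω.u, ω.u2)) -
      Hc (L.joint PS08 Wex3) (fun ω => ω.s) (fun ω => (ω.u, ω.u1, ω.u2, ω.y)) ≤ 0 := by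
  rw [cMI_eq _ _ _ _ (fun c => L.PU c.1 * L.PU2 c.1 c.2) (fun c => L.PU1 c.1)
    (fun c u1 y => ∑ s, PS08 s * KY L c.1 u1 c.2 s y) (law_Y_marginal L)
    (fun c => (L.hPU1 _).2) (fun c u1 => (isPmf_KY_marginal L _ _ _).2)]
  have h1 := (H_pair (L.joint PS08 Wex3) (fun ω => ((ω.u, ω.u2), ω.u1)) (fun ω => ω.y)
    (fun x => L.PU x.1.1 * L.PU2 x.1.1 x.1.2 * L.PU1 x.1.1 x.2)
    (fun x y => ∑ s, PS08 s * KY L x.1.1 x.2 x.1.2 s y)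
    (fun x y => law_Y_marginal L x.1 x.2 y) (fun x => (isPmf_KY_marginal L _ _ _).2)).2
  have h2 := (H_pair (L.joint PS08 Wex3) (fun ω => ((ω.u, ω.u2), ω.u1)) (fun ω => (ω.s, ω.y))
    (fun x => L.PU x.1.1 * L.PU2 x.1.1 x.1.2 * L.PU1 x.1.1 x.2)
    (fun x t => PS08 t.1 * KY L x.1.1 x.2 x.1.2 t.1 t.2)
    (fun x t => law_SY L x.1 x.2 t) (fun x => by
      simp only [Fintype.sum_prod_type, ← Finset.mul_sum, (isPmf_KY L _ _ _ _).2, mul_one]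
      exact isPmf_PS08.2)).2
  have e1 : H (L.joint PS08 Wex3) (fun ω => (ω.u, ω.u1, ω.u2, ω.y)) =
      H (L.joint PS08 Wex3) (fun ω => (((ω.u, ω.u2), ω.u1), ω.y)) :=
    H_equiv (L.joint PS08 Wex3) (fun ω => (((ω.u, ω.u2), ω.u1), ω.y))
      ⟨fun x => (x.1.1.1, x.1.2, x.1.1.2, x.2), fun x => (((x.1, x.2.2.1), x.2.1), x.2.2.2),
        fun _ => rfl, fun _ => rfl⟩
  have e2 : H (L.joint PS08 Wex3) (fun ω => (ω.s, (ω.u, ω.u1, ω.u2, ω.y))) =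
      H (L.joint PS08 Wex3) (fun ω => (((ω.u, ω.u2), ω.u1), (ω.s, ω.y))) :=
    H_equiv (L.joint PS08 Wex3) (fun ω => (((ω.u, ω.u2), ω.u1), (ω.s, ω.y)))
      ⟨fun x => (x.2.1, (x.1.1.1, x.1.2, x.1.1.2, x.2.2)),
        fun x => (((x.2.1, x.2.2.2.1), x.2.2.1), (x.1, x.2.2.2.2)),
        fun _ => rfl, fun _ => rfl⟩
  rw [Hc, e1, e2, h1, h2, add_sub_add_left_eq_sub, ← Finset.sum_sub_distrib,
    Fintype.sum_prod_type (α₁ := L.U × L.U2), ← Finset.sum_sub_distrib]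
  refine Finset.sum_nonpos fun c _ => ?_
  obtain ⟨u, u2⟩ := c
  have hq : 0 ≤ L.PU u * L.PU2 u u2 := mul_nonneg (L.hPU.1 _) ((L.hPU2 _).1 _)
  have hmix := ent_mix_le (fun y => ∑ u1, L.PU1 u u1 * L.PX1 u u1 false y) (L.PX2 u u2 true)
    ((L.hPU1 u).mix fun u1 => L.hPX1 u u1 false) (L.hPX2 u u2 true)
  have hmix_eq : (fun y => ∑ u1, L.PU1 u u1 * ∑ s, PS08 s * KY L u u1 u2 s y) =
      fun y => PS08 false * (∑ u1, L.PU1 u u1 * L.PX1 u u1 false y) +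
        PS08 true * L.PX2 u u2 true y := by
    funext y
    have : PS08 true * L.PX2 u u2 true y =
        ∑ u1, L.PU1 u u1 * (PS08 true * L.PX2 u u2 true y) := by
      rw [← Finset.sum_mul, (L.hPU1 u).2, one_mul]
    rw [this, Finset.mul_sum, ← Finset.sum_add_distrib]
    refine Finset.sum_congr rfl fun u1 _ => ?_
    simp only [Fintype.sum_bool, KY, if_true, Bool.false_eq_true, if_false]
    ring
  have hjoint : ∀ u1, ent PS08 + PS08 true * ent (L.PX2 u u2 true) ≤
      ent (fun t : Bool × Bool => PS08 t.1 * KY L u u1 u2 t.1 t.2) := by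
    intro u1
    rw [ent_chain PS08 (KY L u u1 u2) (fun s => (isPmf_KY L u u1 u2 s).2), Fintype.sum_bool]
    have := mul_nonneg (isPmf_PS08.1 false)
      (ent_nonneg _ (isPmf_KY L u u1 u2 false))
    simp only [KY, if_true] at this ⊢
    linarith
  have havg : ent PS08 + PS08 true * ent (L.PX2 u u2 true) ≤
      ∑ u1, L.PU1 u u1 * ent (fun t : Bool × Bool => PS08 t.1 * KY L u u1 u2 t.1 t.2) := by
    calc ent PS08 + PS08 true * ent (L.PX2 u u2 true)
        = ∑ u1, L.PU1 u u1 * (ent PS08 + PS08 true * ent (L.PX2 u u2 true)) := by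
          rw [← Finset.sum_mul, (L.hPU1 u).2, one_mul]
      _ ≤ _ := Finset.sum_le_sum fun u1 _ =>
          mul_le_mul_of_nonneg_left (hjoint u1) ((L.hPU1 u).1 u1)
  rw [hmix_eq]
  simp only [mul_assoc, ← mul_sub, ← Finset.mul_sum]
  simp only [← mul_assoc]
  refine mul_nonpos_of_nonneg_of_nonpos hq ?_
  simp only [mul_sub, Finset.sum_sub_distrib]
  linarith

/-- `S` is independent of `(U, U1, U2)`. -/
lemma H_indep (L : AuxLawD2 Bool Bool Bool Bool Bool) :
    H (L.joint PS08 Wex3) (fun ω => (ω.s, ω.u, ω.u1, ω.u2)) =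
      H (L.joint PS08 Wex3) (fun ω => ω.s) +
        H (L.joint PS08 Wex3) (fun ω => (ω.u, ω.u1, ω.u2)) := by
  set q : L.U × L.U1 × L.U2 → ℝ := fun x => L.PU x.1 * L.PU2 x.1 x.2.2 * L.PU1 x.1 x.2.1
    with hq
  have hq1 : ∑ x, q x = 1 := by
    simp only [hq, Fintype.sum_prod_type]
    simp only [mul_assoc, ← Finset.mul_sum]
    simp only [← Finset.sum_mul, (L.hPU2 _).2, one_mul, (L.hPU1 _).2, mul_one, L.hPU.2]
  have hlaw : ∀ s x, law (L.joint PS08 Wex3) (fun ω => (ω.s, (ω.u, ω.u1, ω.u2))) (s, x) =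
      PS08 s * q x := by
    intro s x
    obtain ⟨u, u1, u2⟩ := x
    rw [law_fst _ _ (fun ω => ω.y)]
    have : ∀ y, law (L.joint PS08 Wex3) (fun ω => ((ω.s, (ω.u, ω.u1, ω.u2)), ω.y))
        ((s, (u, u1, u2)), y) = PS08 s * q (u, u1, u2) * KY L u u1 u2 s y := by
      intro y
      have h := law_SY L (u, u2) u1 (s, y)
      rw [show PS08 s * q (u, u1, u2) * KY L u u1 u2 s y =
        L.PU u * L.PU2 u u2 * L.PU1 u u1 * (PS08 s * KY L u u1 u2 s y) by
          simp only [hq]; ring, ← h]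
      simp only [law, Prod.mk.injEq]
      exact Finset.sum_congr rfl fun ω _ => if_congr (by tauto) rfl rfl
    simp only [this, ← Finset.mul_sum, (isPmf_KY L _ _ _ _).2, mul_one]
  exact H_pair_indep (L.joint PS08 Wex3) (fun ω => ω.s) (fun ω => (ω.u, ω.u1, ω.u2)) PS08 q hlaw isPmf_PS08.2 hq1

lemma sum_rate_identity (L : AuxLawD2 Bool Bool Bool Bool Bool) :
    MI (L.joint PS08 Wex3) (fun ω => (ω.s, ω.u, ω.u1, ω.u2)) (fun ω => ω.y) -
        H (L.joint PS08 Wex3) (fun ω => ω.s) =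
      MI (L.joint PS08 Wex3) (fun ω => (ω.u, ω.u1, ω.u2)) (fun ω => ω.y) -
        Hc (L.joint PS08 Wex3) (fun ω => ω.s) (fun ω => (ω.y, ω.u, ω.u1, ω.u2)) := by
  have e1 : H (L.joint PS08 Wex3) (fun ω => (ω.y, (ω.u, ω.u1, ω.u2))) =
      H (L.joint PS08 Wex3) (fun ω => ((ω.u, ω.u1, ω.u2), ω.y)) :=
    H_equiv (L.joint PS08 Wex3) (fun ω => ((ω.u, ω.u1, ω.u2), ω.y)) (Equiv.prodComm _ _)
  have e2 : H (L.joint PS08 Wex3) (fun ω => (ω.s, (ω.y, ω.u, ω.u1, ω.u2))) =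
      H (L.joint PS08 Wex3) (fun ω => ((ω.s, ω.u, ω.u1, ω.u2), ω.y)) :=
    H_equiv (L.joint PS08 Wex3) (fun ω => ((ω.s, ω.u, ω.u1, ω.u2), ω.y))
      ⟨fun x => (x.1.1, x.2, x.1.2), fun x => ((x.1, x.2.2), x.2.1), fun _ => rfl, fun _ => rfl⟩
  rw [MI, MI, Hc, e1, e2, H_indep]
  ring

/-! ### Scheme-1 laws and scheme-2 laws -/

lemma cMI_comp {Ω T α β γ : Type*} [Fintype Ω] [Fintype T] [DecidableEq T] [Fintype α]
    [Fintype β] [Fintype γ] [DecidableEq α] [DecidableEq β] [DecidableEq γ] (p : Ω → ℝ)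
    (π : Ω → T) (A : T → α) (B : T → β) (C : T → γ) :
    cMI p (fun ω => A (π ω)) (fun ω => B (π ω)) (fun ω => C (π ω)) =
      cMI (law p π) A B C := by
  simp only [cMI, Hc, H_comp p π C, H_comp p π (fun t => (A t, C t)),
    H_comp p π (fun t => (B t, C t)), H_comp p π (fun t => (A t, B t, C t))]

/-- The scheme-2 law obtained from a scheme-1 law by forgetting `V`. -/
abbrev forgetV (L : AuxLawR1 Bool Bool Bool Bool Bool) : AuxLawD2 Bool Bool Bool Bool Bool where
  U := L.U
  U1 := L.U1
  U2 := L.U2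
  PU := L.PU
  PU1 := L.PU1
  PU2 := L.PU2
  PX1 := L.PX1
  PX2 := L.PX2
  hPU := L.hPU
  hPU1 := L.hPU1
  hPU2 := L.hPU2
  hPX1 := L.hPX1
  hPX2 := L.hPX2

/-- Instance search does not reach this instance through eight factors within its default size
bound. -/
instance instDecidableEqO8 {U U1 U2 : Type} [DecidableEq U] [DecidableEq U1] [DecidableEq U2] :
    DecidableEq (O8 U U1 U2 Bool Bool Bool Bool Bool) :=
  letI : DecidableEq (U2 × Bool × Bool × Bool × Bool × Bool) := inferInstance
  instDecidableEqProd

lemma law_forgetV (L : AuxLawR1 Bool Bool Bool Bool Bool) :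
    law (L.joint PS08 Wex3) (fun ω => ω.2) = (forgetV L).joint PS08 Wex3 := by
  funext x
  simp only [law]
  rw [Fintype.sum_prod_type]
  simp only [Finset.sum_ite_eq', Finset.mem_univ, if_true]
  simp only [AuxLawR1.joint, jointR1, AuxLawD2.joint, jointD2, O9.s, O9.v, O9.u, O9.u1, O9.u2,
    O9.x1, O9.x2, O9.y, O9.z, O8.s, O8.u, O8.u1, O8.u2, O8.x1, O8.x2, O8.y, O8.z]
  simp only [← Finset.sum_mul, ← Finset.mul_sum, (L.hPV _).2, mul_one]

lemma jensen_part_R1 (L : AuxLawR1 Bool Bool Bool Bool Bool) :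
    cMI (L.joint PS08 Wex3) (fun ω => ω.u1) (fun ω => ω.y) (fun ω => (ω.s, ω.u, ω.u2)) ≤
      cMI (L.joint PS08 Wex3) (fun ω => ω.u1) (fun ω => ω.z) (fun ω => (ω.s, ω.u, ω.u2)) := by
  have h := jensen_part (forgetV L)
  rw [← law_forgetV, ← cMI_comp, ← cMI_comp] at h
  exact h

lemma sum_law {Ω α : Type*} [Fintype Ω] [Fintype α] [DecidableEq α] (p : Ω → ℝ) (X : Ω → α) :
    ∑ a, law p X a = ∑ ω, p ω := by
  simp only [law]
  rw [Finset.sum_comm]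
  simp

lemma sum_joint (L : AuxLawD2 Bool Bool Bool Bool Bool) : ∑ ω, L.joint PS08 Wex3 ω = 1 := by
  rw [← sum_law _ (fun ω => (((ω.u, ω.u2), ω.u1), (ω.s, ω.y))), Fintype.sum_prod_type]
  simp only [Fintype.sum_prod_type (α₁ := L.U × L.U2)]
  simp only [law_SY L, ← Finset.mul_sum, Fintype.sum_prod_type, (isPmf_KY L _ _ _ _).2, mul_one,
    isPmf_PS08.2, (L.hPU1 _).2, (L.hPU2 _).2, L.hPU.2]

lemma Wex3_nonneg (x1 x2 s : Bool) (t : Bool × Bool) : 0 ≤ Wex3 x1 x2 s t := by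
  simp only [Wex3]
  split_ifs <;> norm_num

lemma joint_nonneg (L : AuxLawD2 Bool Bool Bool Bool Bool) (ω) :
    0 ≤ L.joint PS08 Wex3 ω := by
  simp only [AuxLawD2.joint, jointD2]
  have h1 := isPmf_PS08.1 ω.s
  have h2 := L.hPU.1 ω.u
  have h3 := (L.hPU1 ω.u).1 ω.u1
  have h4 := (L.hPU2 ω.u).1 ω.u2
  have h5 := (L.hPX1 ω.u ω.u1 ω.s).1 ω.x1
  have h6 := (L.hPX2 ω.u ω.u2 ω.s).1 ω.x2
  have h7 := Wex3_nonneg ω.x1 ω.x2 ω.s (ω.y, ω.z)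
  positivity

lemma MI_unit {Ω β : Type*} [Fintype Ω] [Fintype β] [DecidableEq β] (p : Ω → ℝ)
    (hp : ∑ ω, p ω = 1) (X : Ω → Unit) (Y : Ω → β) : MI p X Y = 0 := by
  have h1 : H p (fun ω => (X ω, Y ω)) = H p Y :=
    H_equiv p Y (Equiv.punitProd β).symm
  have h2 : H p X = 0 := by
    simp [H, ent, law, hp]
  rw [MI, h1, h2]
  ring

/-- The scheme-1 law extending a scheme-2 law by a constant `V`. -/
abbrev constV (L : AuxLawD2 Bool Bool Bool Bool Bool) : AuxLawR1 Bool Bool Bool Bool Bool where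
  V := Unit
  U := L.U
  U1 := L.U1
  U2 := L.U2
  PV := fun _ _ => 1
  PU := L.PU
  PU1 := L.PU1
  PU2 := L.PU2
  PX1 := L.PX1
  PX2 := L.PX2
  hPV := fun _ => ⟨fun _ => zero_le_one, by simp⟩
  hPU := L.hPU
  hPU1 := L.hPU1
  hPU2 := L.hPU2
  hPX1 := L.hPX1
  hPX2 := L.hPX2

/-- A point of the scheme-2 region has `R1 = 0` by `secrecy_rate_nonpos`, so it lies in the
scheme-1 region of the same law with `V` constant, whose sum rate `I(U,U1,U2;Y)` is at least
as large. -/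
lemma inclusion : RegionD22 PS08 Wex3 ⊆ RegionD12 PS08 Wex3 := by
  rintro R ⟨L, hR0, hR1, hR, hsum⟩
  have hR1' : R.2 = 0 :=
    le_antisymm ((hR.trans (min_le_right _ _)).trans (secrecy_rate_nonpos L)) hR1
  have hlaw : law ((constV L).joint PS08 Wex3) (fun ω => ω.2) = L.joint PS08 Wex3 :=
    law_forgetV (constV L)
  have hp : ∑ ω, (constV L).joint PS08 Wex3 ω = 1 := by
    rw [← sum_law _ (fun ω => ω.2), hlaw, sum_joint]
  have hMI : ∀ {β : Type} [Fintype β] [DecidableEq β] (Y : _ → β),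
      MI ((constV L).joint PS08 Wex3) (fun ω => ω.v) Y = 0 :=
    fun Y => MI_unit _ hp _ Y
  refine ⟨constV L, hR0, hR1, ?_, ?_⟩
  · rw [hR1']
    refine le_min ?_ ?_
    · rw [RSKD, hMI, hMI, sub_self]
    · refine cMI_nonneg_of_kernel _ _ _ _ (fun c => L.PU c.1 * L.PU2 c.1 c.2.1)
        (fun c => L.PU1 c.1) (fun c u1 y => ∑ s, PS08 s * KY L c.1 u1 c.2.1 s y) ?_
        (fun c => mul_nonneg (L.hPU.1 _) ((L.hPU2 _).1 _)) (fun c => L.hPU1 _)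
        (fun c u1 => isPmf_KY_marginal L _ _ _)
      rintro ⟨u, u2, v⟩ u1 y
      rw [← law_Y_marginal L (u, u2) u1 y, ← hlaw, ← law_comp]
      simp only [law, Prod.mk.injEq]
      refine Finset.sum_congr rfl fun ω _ => if_congr ?_ rfl rfl
      constructor
      · rintro ⟨⟨⟨h1, h2, -⟩, h3⟩, h4⟩
        exact ⟨⟨⟨h1, h2⟩, h3⟩, h4⟩
      · rintro ⟨⟨⟨h1, h2⟩, h3⟩, h4⟩
        exact ⟨⟨⟨h1, h2, trivial⟩, h3⟩, h4⟩
  · have e1 : H ((constV L).joint PS08 Wex3) (fun ω => (ω.v, ω.u, ω.u1, ω.u2)) =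
        H (L.joint PS08 Wex3) (fun ω => (ω.u, ω.u1, ω.u2)) := by
      rw [← hlaw, ← H_comp]
      exact H_equiv ((constV L).joint PS08 Wex3) (fun ω => (ω.u, ω.u1, ω.u2))
        (Equiv.punitProd _).symm
    have e2 : H ((constV L).joint PS08 Wex3) (fun ω => ((ω.v, ω.u, ω.u1, ω.u2), ω.y)) =
        H (L.joint PS08 Wex3) (fun ω => ((ω.u, ω.u1, ω.u2), ω.y)) := by
      rw [← hlaw, ← H_comp]
      exact H_equiv ((constV L).joint PS08 Wex3) (fun ω => ((ω.u, ω.u1, ω.u2), ω.y))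
        ((Equiv.punitProd _).symm.prodCongr (Equiv.refl _))
    have e3 : H ((constV L).joint PS08 Wex3) (fun ω => ω.y) =
        H (L.joint PS08 Wex3) (fun ω => ω.y) := by
      rw [← hlaw, ← H_comp]
      rfl
    have hHc := Hc_nonneg (L.joint PS08 Wex3) (joint_nonneg L) (fun ω => ω.s)
      (fun ω => (ω.u, ω.u1, ω.u2, ω.y))
    rw [hMI, MI, e1, e2, e3, sub_zero]
    rw [MI] at hsum
    linarith

/-! ### The explicit scheme-1 point -/

/-- The point mass at `a`. -/
def dirac (a : Bool) : Bool → ℝ := fun b => if b = a then 1 else 0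

lemma isPmf_dirac (a : Bool) : IsPmf (dirac a) :=
  ⟨fun b => by simp only [dirac]; split_ifs <;> norm_num, by simp [dirac]⟩

lemma ent_dirac (a : Bool) : ent (dirac a) = 0 := by
  cases a <;> simp [ent, dirac]

lemma ent_PS08_not : ent (fun b => PS08 (!b)) = ent PS08 := by
  simp only [ent, Fintype.sum_bool, Bool.not_true, Bool.not_false]
  ring

/-- The scheme-1 law with `V = S`, `U` constant, `U1 = X1`, `U2 = X2`, `Pr{X1=0} = 0.2` and
`Pr{X2=0} = 0.8`. -/
abbrev exLaw : AuxLawR1 Bool Bool Bool Bool Bool where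
  V := Bool
  U := Unit
  U1 := Bool
  U2 := Bool
  PV := dirac
  PU := fun _ => 1
  PU1 := fun _ => PS08
  PU2 := fun _ b => PS08 (!b)
  PX1 := fun _ u1 _ => dirac u1
  PX2 := fun _ u2 _ => dirac u2
  hPV := isPmf_dirac
  hPU := ⟨fun _ => zero_le_one, by simp⟩
  hPU1 := fun _ => isPmf_PS08
  hPU2 := fun _ => ⟨fun b => isPmf_PS08.1 _, by norm_num [PS08]⟩
  hPX1 := fun _ u1 _ => isPmf_dirac u1
  hPX2 := fun _ u2 _ => isPmf_dirac u2

/-- The law of the independent triple `(S, X1, X2)` underlying `exLaw`. -/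
def exMass (t : Bool × Bool × Bool) : ℝ := PS08 t.1 * PS08 t.2.1 * PS08 (!t.2.2)

/-- All the variables of `exLaw` as functions of `(S, X1, X2)`. -/
def exMap (t : Bool × Bool × Bool) : O9 Bool Unit Bool Bool Bool Bool Bool Bool Bool :=
  (t.1, (), t.2.1, t.2.2, t.2.1, t.2.2, t.1, cond t.1 t.2.2 t.2.1, t.2.1)

instance instDecidableEqO9 : DecidableEq (O9 Bool Unit Bool Bool Bool Bool Bool Bool Bool) :=
  letI : DecidableEq (Unit × Bool × Bool × Bool × Bool × Bool × Bool × Bool) :=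
    instDecidableEqO8
  instDecidableEqProd

lemma law_exMap : law exMass exMap = exLaw.joint PS08 Wex3 := by
  funext ω
  obtain ⟨v, u, u1, u2, x1, x2, s, y, z⟩ := ω
  simp only [law, exMap, exMass, AuxLawR1.joint, jointR1, O9.s, O9.v, O9.u1, O9.u2,
    O9.x1, O9.x2, O9.y, O9.z, Fintype.sum_prod_type, Prod.mk.injEq, ite_and,
    Finset.sum_ite_irrel, Finset.sum_const_zero, Finset.sum_ite_eq', Finset.mem_univ, if_true,
    dirac, Wex3]
  by_cases h1 : x1 = u1
  · by_cases h2 : x2 = u2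
    · by_cases h3 : v = s
      · subst h1 h2 h3
        by_cases h4 : y = cond v x2 x1
        · by_cases h5 : z = x1
          · subst h4 h5; simp
          · simp [h4, h5, Ne.symm h5]
        · simp [h4, Ne.symm h4]
      · simp [h3]
    · simp [h2, Ne.symm h2]
  · simp [h1, Ne.symm h1]

lemma H_ex {α : Type*} [Fintype α] [DecidableEq α]
    (X : O9 Bool Unit Bool Bool Bool Bool Bool Bool Bool → α) :
    H (exLaw.joint PS08 Wex3) X = H exMass (fun t => X (exMap t)) := by
  rw [← law_exMap]
  exact (H_comp exMass exMap X).symm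

lemma hb_eq (x : ℝ) : hb x = Real.binEntropy x / Real.log 2 := by
  rw [hb, Real.binEntropy_eq_negMulLog_add_negMulLog_one_sub]
  simp only [Real.negMulLog, Real.logb]
  ring

lemma hb_fifth : hb 0.2 = ent PS08 := by
  rw [hb_eq, ent_bool _ isPmf_PS08.2, show PS08 true = 1 - 0.2 by norm_num [PS08],
    Real.binEntropy_one_sub]

/-- `1.2 h(0.2) ≤ h(0.32)`, which is equivalent to `17 ^ 17 ≤ 5 ^ 20 * 2 ^ 24`. -/
lemma entropy_numeric (p : Bool → ℝ) (hp : p true = 8 / 25) (hp1 : ∑ b, p b = 1) :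
    6 / 5 * ent PS08 ≤ ent p := by
  rw [ent_bool _ hp1, ent_bool _ isPmf_PS08.2, hp, show PS08 true = 1 - 1 / 5 by norm_num [PS08],
    Real.binEntropy_one_sub, binEntropy_fifth, mul_div_assoc']
  refine div_le_div_of_nonneg_right ?_ (Real.log_nonneg (by norm_num))
  have h8 : Real.log 8 = 3 * Real.log 2 := by
    rw [show (8 : ℝ) = 2 ^ 3 by norm_num, Real.log_pow]; norm_num
  have h25 : Real.log 25 = 2 * Real.log 5 := by
    rw [show (25 : ℝ) = 5 ^ 2 by norm_num, Real.log_pow]; norm_num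
  have key : 17 * Real.log 17 ≤ 20 * Real.log 5 + 24 * Real.log 2 := by
    have := Real.log_le_log (x := 17 ^ 17) (y := 5 ^ 20 * 2 ^ 24) (by norm_num) (by norm_num)
    rw [Real.log_mul (by norm_num) (by norm_num), Real.log_pow, Real.log_pow, Real.log_pow]
      at this
    exact_mod_cast this
  rw [Real.binEntropy_eq_negMulLog_add_negMulLog_one_sub, Real.negMulLog, Real.negMulLog,
    show (1 : ℝ) - 8 / 25 = 17 / 25 by norm_num, Real.log_div (by norm_num) (by norm_num),
    Real.log_div (by norm_num) (by norm_num), h8, h25]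
  linarith

lemma ex_H_v : H (exLaw.joint PS08 Wex3) (fun ω => ω.v) = ent PS08 ∧
    H (exLaw.joint PS08 Wex3) (fun ω => (ω.v, ω.y)) = 2 * ent PS08 := by
  rw [H_ex, H_ex]
  have h := H_pair exMass (fun t => t.1) (fun t => cond t.1 t.2.2 t.2.1) PS08
    (fun s y => PS08 (if s then !y else y)) (fun s y => by
      cases s <;> cases y <;> norm_num [law, Fintype.sum_prod_type, exMass, PS08])
    (fun s => by cases s <;> norm_num [PS08])
  refine ⟨h.1, h.2.trans ?_⟩
  have e1 := isPmf_PS08.2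
  rw [Fintype.sum_bool] at e1 ⊢
  simp only [if_true, Bool.false_eq_true, if_false, ent_PS08_not]
  linear_combination (ent PS08) * e1

lemma ex_H_y : 6 / 5 * ent PS08 ≤ H (exLaw.joint PS08 Wex3) (fun ω => ω.y) := by
  rw [H_ex]
  refine entropy_numeric _ ?_ ?_
  · norm_num [law, Fintype.sum_prod_type, exMass, PS08, exMap, O9.y]
  · rw [sum_law]
    norm_num [Fintype.sum_prod_type, exMass, PS08]

lemma ex_MI_z : MI (exLaw.joint PS08 Wex3) (fun ω => ω.v) (fun ω => (ω.z, ω.u, ω.u2)) = 0 := by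
  have h := H_pair_indep exMass (fun t => t.1) (fun t => (t.2.1, (), t.2.2)) PS08
    (fun x : Bool × Unit × Bool => PS08 x.1 * PS08 (!x.2.2)) (fun s x => by
      obtain ⟨a, u, b⟩ := x
      cases s <;> cases a <;> cases b <;>
        norm_num [law, Fintype.sum_prod_type, exMass, PS08]) isPmf_PS08.2
    (by norm_num [Fintype.sum_prod_type, PS08])
  rw [MI, H_ex, H_ex, H_ex]
  have h' := sub_eq_zero.2 h.symm
  exact h'

lemma ex_cMI : cMI (exLaw.joint PS08 Wex3) (fun ω => ω.u1) (fun ω => ω.y)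
    (fun ω => (ω.u, ω.u2, ω.v)) = 1 / 5 * ent PS08 := by
  have hlaw : ∀ (c : Unit × Bool × Bool) (a b : Bool),
      law exMass (fun t => ((((), t.2.2, t.1), t.2.1), cond t.1 t.2.2 t.2.1)) ((c, a), b) =
        PS08 (!c.2.1) * PS08 c.2.2 * PS08 a * dirac (cond c.2.2 c.2.1 a) b := by
    rintro ⟨u, u2, v⟩ a b
    cases u2 <;> cases v <;> cases a <;> cases b <;>
      norm_num [law, Fintype.sum_prod_type, exMass, PS08, dirac]
  rw [← law_exMap, ← cMI_comp exMass exMap,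
    cMI_eq _ _ _ _ (fun c => PS08 (!c.2.1) * PS08 c.2.2) (fun _ => PS08)
    (fun c a => dirac (cond c.2.2 c.2.1 a)) ?_ (fun _ => isPmf_PS08.2)
    (fun c a => (isPmf_dirac _).2)]
  · have hmix : (fun b => ∑ a, PS08 a * dirac a b) = PS08 := by
      funext b
      simp [dirac]
    simp only [Fintype.sum_prod_type, ent_dirac, mul_zero, Finset.sum_const_zero, sub_zero]
    simp only [Fintype.sum_bool (f := fun v => PS08 _ * PS08 v * _), cond_true, cond_false, hmix,
      ← Finset.sum_mul, isPmf_PS08.2, one_mul, ent_dirac]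
    norm_num [PS08]
    ring
  · exact hlaw

lemma ex_MI_v_s : MI (exLaw.joint PS08 Wex3) (fun ω => ω.v) (fun ω => ω.s) = ent PS08 := by
  have h := H_pair exMass (fun t => t.1) (fun t => t.1) PS08 dirac (fun s s' => by
      cases s <;> cases s' <;> norm_num [law, Fintype.sum_prod_type, exMass, PS08, dirac])
    (fun s => (isPmf_dirac s).2)
  simp only [ent_dirac, mul_zero, Finset.sum_const_zero, add_zero] at h
  rw [MI, H_ex, H_ex, H_ex]
  have h' : H exMass (fun t => t.1) + H exMass (fun t => t.1) -
      H exMass (fun t => (t.1, t.1)) = ent PS08 := by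
    rw [h.1, h.2]; ring
  exact h'

lemma ex_MI_y : MI (exLaw.joint PS08 Wex3) (fun ω => (ω.v, ω.u, ω.u1, ω.u2)) (fun ω => ω.y) =
    H (exLaw.joint PS08 Wex3) (fun ω => ω.y) := by
  have h := H_pair exMass (fun t => (t.1, (), t.2.1, t.2.2)) (fun t => cond t.1 t.2.2 t.2.1)
    (fun x : Bool × Unit × Bool × Bool => exMass (x.1, x.2.2.1, x.2.2.2))
    (fun x => dirac (cond x.1 x.2.2.2 x.2.2.1)) (fun x y => by
      obtain ⟨s, u, a, b⟩ := x
      cases s <;> cases a <;> cases b <;> cases y <;>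
        simp [law, Fintype.sum_prod_type, exMass, dirac])
    (fun x => (isPmf_dirac _).2)
  simp only [ent_dirac, mul_zero, Finset.sum_const_zero, add_zero] at h
  rw [MI, H_ex (fun ω => (ω.v, ω.u, ω.u1, ω.u2)),
    H_ex (fun ω => ((ω.v, ω.u, ω.u1, ω.u2), ω.y))]
  have h' := h.1.trans h.2.symm
  linarith [show H exMass (fun t => ((exMap t).v, (exMap t).u, (exMap t).u1, (exMap t).u2)) =
    H exMass (fun t => (((exMap t).v, (exMap t).u, (exMap t).u1, (exMap t).u2), (exMap t).y))
    from h']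

lemma ex_point : ((0 : ℝ), (0.2 : ℝ) * hb 0.2) ∈ RegionD12 PS08 Wex3 := by
  have hpos := ent_nonneg _ isPmf_PS08
  have hy := ex_H_y
  refine ⟨exLaw, le_rfl, ?_, le_min ?_ ?_, ?_⟩
  · rw [hb_fifth]
    positivity
  · rw [hb_fifth, RSKD, ex_MI_z, MI, ex_H_v.1, ex_H_v.2]
    norm_num
    linarith
  · rw [hb_fifth, ex_cMI]
    norm_num
  · rw [hb_fifth, ex_MI_y, ex_MI_v_s]
    norm_num
    linarith

/-- **Example 2 (degraded message sets; Coding scheme 1 strictly outperforms Coding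
scheme 2).** For the channel `Y = X1` if `S=0`, `Y = X2` if `S=1`, `Z = X1` with
`Pr{S=1} = 0.8`:
(i) for every admissible joint law (of either scheme), `I(U1;Y|S,U,U2) ≤ I(U1;Z|S,U,U2)`;
(ii) `R^{CSI-E}_{D,12}` contains a point with `R1 = 0.2·h(0.2)`, while every point of
`R^{CSI-E}_{D,22}` has `R1 ≤ log2(1 + 0.2·0.8⁴)`;
(iii) for every admissible scheme-2 law the sum-rate identity
`I(S,U,U1,U2;Y) - H(S) = I(U,U1,U2;Y) - H(S|Y,U,U1,U2)` holds (the `V = S` sum-rate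
bound of scheme 1 covers that of scheme 2), and consequently
`R^{CSI-E}_{D,22} ⊆ R^{CSI-E}_{D,12}` for this channel. -/
theorem example2_degraded_message_sets :
    (∀ L : AuxLawR1 Bool Bool Bool Bool Bool,
      cMI (L.joint PS08 Wex3) (fun ω => ω.u1) (fun ω => ω.y)
          (fun ω => (ω.s, ω.u, ω.u2)) ≤
        cMI (L.joint PS08 Wex3) (fun ω => ω.u1) (fun ω => ω.z)
          (fun ω => (ω.s, ω.u, ω.u2))) ∧
    (∀ L : AuxLawD2 Bool Bool Bool Bool Bool,
      cMI (L.joint PS08 Wex3) (fun ω => ω.u1) (fun ω => ω.y)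
          (fun ω => (ω.s, ω.u, ω.u2)) ≤
        cMI (L.joint PS08 Wex3) (fun ω => ω.u1) (fun ω => ω.z)
          (fun ω => (ω.s, ω.u, ω.u2))) ∧
    (∃ R0 : ℝ, (R0, (0.2 : ℝ) * hb 0.2) ∈ RegionD12 PS08 Wex3) ∧
    (∀ R ∈ RegionD22 PS08 Wex3,
      R.2 ≤ Real.logb 2 (1 + (0.2 : ℝ) * (0.8 : ℝ) ^ (4 : ℕ))) ∧
    (∀ L : AuxLawD2 Bool Bool Bool Bool Bool,
      MI (L.joint PS08 Wex3) (fun ω => (ω.s, ω.u, ω.u1, ω.u2)) (fun ω => ω.y) -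
          H (L.joint PS08 Wex3) (fun ω => ω.s) =
        MI (L.joint PS08 Wex3) (fun ω => (ω.u, ω.u1, ω.u2)) (fun ω => ω.y) -
          Hc (L.joint PS08 Wex3) (fun ω => ω.s) (fun ω => (ω.y, ω.u, ω.u1, ω.u2))) ∧
    RegionD22 PS08 Wex3 ⊆ RegionD12 PS08 Wex3 := by
  refine ⟨jensen_part_R1, jensen_part, ⟨0, ex_point⟩, ?_, sum_rate_identity, inclusion⟩
  rintro R ⟨L, -, -, hR, -⟩
  exact ((hR.trans (min_le_right _ _)).trans (secrecy_rate_nonpos L)).trans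
    (Real.logb_nonneg (by norm_num) (by norm_num))

end Paper
end
end

section
/- Entropy identity used in the achievability proof of Theorem 5: Let (U, U1, S, X1, X2, Y, Z) be finite random variables such that (i) S is independent of the triple (U, U1, X2), (ii) X1 = g(U, U1, S) for some deterministic function g, and (iii) (U, U1) - (X1, X2, S) - (Y, Z) is a Markov chain. Then I(U1;Y|U,X2) - I(U1;Z|U,X2,S) - H(S|U,U1,X2,Y) + H(S|Z,U,X2) = I(X1,S;Y|U,X2) - I(X1,S;Z|U,X2). -/
/-!
Expanding every information quantity into joint entropies and cancelling, the left side minus the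
right side becomes a combination of two kinds of terms. The first,
`H(U,U1,X2) - H(S,U,U1,X2) + H(S,U,X2) - H(U,X2)`, vanishes because `S` is independent of
`(U,U1,X2)`, hence also of `(U,X2)`. The second compares `H(Z,U,U1,X2,S) - H(Y,U,U1,X2,S)` with
`H(Z,U,X1,X2,S) - H(Y,U,X1,X2,S)`. As `X1` is a function of `(U,U1,S)` it may be added to the first
pair for free, and the Markov chain, marginalised to `Y` or `Z` on one side and to `(U,U1)` or `U`
on the other, shows that both differences equal `H(Z,X1,X2,S) - H(Y,X1,X2,S)`.

The tools are `H_congr` (entropy depends only on the partition of `Ω` induced by the variable),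
`CondIndepLaw.map_left` / `map_right` (conditional independence passes to functions of the
variables) and `CondIndepLaw.entropy` (the entropy equation of conditional independence).
-/

open scoped BigOperators

noncomputable section

namespace Paper

/-- An entropy is the average over the sample space of the logarithm of the mass of the fibre. -/
lemma H_eq_sum {Ω α : Type*} [Fintype Ω] [Fintype α] [DecidableEq α] (p : Ω → ℝ)
    (X : Ω → α) : H p X = -∑ ω, p ω * Real.logb 2 (law p X (X ω)) := by
  unfold H ent
  congr 1
  have h : ∀ a, law p X a * Real.logb 2 (law p X a) =
      ∑ ω, if X ω = a then p ω * Real.logb 2 (law p X a) else 0 := by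
    intro a
    conv_lhs => enter [1]; unfold law
    rw [Finset.sum_mul]
    exact Finset.sum_congr rfl fun ω _ => by split_ifs <;> simp
  simp_rw [h]
  rw [Finset.sum_comm]
  simp

/-- Entropy depends only on the partition of the sample space induced by the variable. -/
lemma H_congr {Ω α β : Type*} [Fintype Ω] [Fintype α] [DecidableEq α] [Fintype β]
    [DecidableEq β] (p : Ω → ℝ) (X : Ω → α) (Y : Ω → β)
    (h : ∀ ω ω', X ω = X ω' ↔ Y ω = Y ω') : H p X = H p Y := by
  simp only [H_eq_sum, law, h]

lemma law_pair_comp {Ω α β γ : Type*} [Fintype Ω] [Fintype α] [DecidableEq α]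
    [DecidableEq β] [DecidableEq γ] (p : Ω → ℝ) (X : Ω → α) (Y : Ω → γ) (f : α → β)
    (b : β) (c : γ) :
    law p (fun ω => (f (X ω), Y ω)) (b, c) =
      ∑ a, if f a = b then law p (fun ω => (X ω, Y ω)) (a, c) else 0 := by
  have h : ∀ a, (if f a = b then law p (fun ω => (X ω, Y ω)) (a, c) else 0) =
      ∑ ω, if X ω = a then (if f a = b ∧ Y ω = c then p ω else 0) else 0 := by
    intro a
    simp only [law, Prod.mk.injEq]
    by_cases hf : f a = b
    · simp only [hf, if_true, true_and, ite_and]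
    · simp [hf]
  simp_rw [h]
  rw [Finset.sum_comm]
  simp [law]

lemma law_self_pos {Ω α : Type*} [Fintype Ω] [DecidableEq α] {p : Ω → ℝ}
    (hp : ∀ ω, 0 ≤ p ω) (X : Ω → α) {ω : Ω} (h : p ω ≠ 0) : 0 < law p X (X ω) := by
  refine lt_of_lt_of_le (lt_of_le_of_ne (hp ω) h.symm) ?_
  have := Finset.single_le_sum (f := fun ω' => if X ω' = X ω then p ω' else 0)
    (fun ω' _ => by split_ifs <;> simp [hp ω']) (Finset.mem_univ ω)
  simpa [law] using this

/-- `A` and `B` are conditionally independent given `C`, in the division-free form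
`P(a,b,c) P(c) = P(a,c) P(b,c)`. -/
def CondIndepLaw {Ω α β γ : Type*} [Fintype Ω] [DecidableEq α] [DecidableEq β] [DecidableEq γ]
    (p : Ω → ℝ) (A : Ω → α) (B : Ω → β) (C : Ω → γ) : Prop :=
  ∀ a b c, law p (fun ω => (A ω, B ω, C ω)) (a, b, c) * law p C c =
    law p (fun ω => (A ω, C ω)) (a, c) * law p (fun ω => (B ω, C ω)) (b, c)

section CondIndep

variable {Ω α β γ δ : Type*} [Fintype Ω] [DecidableEq α] [DecidableEq β] [DecidableEq γ]
  [DecidableEq δ] {p : Ω → ℝ} {A : Ω → α} {B : Ω → β} {C : Ω → γ}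

lemma CondIndepLaw.symm (h : CondIndepLaw p A B C) : CondIndepLaw p B A C := by
  intro b a c
  have hswap : law p (fun ω => (B ω, A ω, C ω)) (b, a, c) =
      law p (fun ω => (A ω, B ω, C ω)) (a, b, c) := by
    simp only [law, Prod.mk.injEq, and_left_comm]
  rw [hswap, h a b c, mul_comm]

lemma CondIndepLaw.map_left [Fintype α] (h : CondIndepLaw p A B C) (f : α → δ) :
    CondIndepLaw p (fun ω => f (A ω)) B C := by
  intro d b c
  rw [law_pair_comp p A (fun ω => (B ω, C ω)) f, law_pair_comp p A C f, Finset.sum_mul,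
    Finset.sum_mul]
  refine Finset.sum_congr rfl fun a _ => ?_
  split_ifs
  · exact h a b c
  · simp

lemma CondIndepLaw.map_right [Fintype β] (h : CondIndepLaw p A B C) (f : β → δ) :
    CondIndepLaw p A (fun ω => f (B ω)) C :=
  (h.symm.map_left f).symm

/-- Conditional independence gives `H(A,B,C) + H(C) = H(A,C) + H(B,C)`: take logarithms of the
defining equation at every sample point of positive mass, and average. -/
lemma CondIndepLaw.entropy [Fintype α] [Fintype β] [Fintype γ] (hp : ∀ ω, 0 ≤ p ω)
    (h : CondIndepLaw p A B C) :
    H p (fun ω => (A ω, B ω, C ω)) + H p C =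
      H p (fun ω => (A ω, C ω)) + H p (fun ω => (B ω, C ω)) := by
  simp only [H_eq_sum, ← neg_add, ← Finset.sum_add_distrib, ← mul_add]
  congr 1
  refine Finset.sum_congr rfl fun ω _ => ?_
  by_cases h0 : p ω = 0
  · simp [h0]
  · rw [← Real.logb_mul (law_self_pos hp (fun ω => (A ω, B ω, C ω)) h0).ne'
        (law_self_pos hp C h0).ne',
      ← Real.logb_mul (law_self_pos hp (fun ω => (A ω, C ω)) h0).ne'
        (law_self_pos hp (fun ω => (B ω, C ω)) h0).ne', h]

end CondIndep

/-- **Entropy identity used in the achievability proof of Theorem 5.**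
If `S` is independent of `(U,U1,X2)`, `X1` is a deterministic function of `(U,U1,S)`, and
`(U,U1) - (X1,X2,S) - (Y,Z)` is a Markov chain, then
`I(U1;Y|U,X2) - I(U1;Z|U,X2,S) - H(S|U,U1,X2,Y) + H(S|Z,U,X2)
  = I(X1,S;Y|U,X2) - I(X1,S;Z|U,X2)`. -/
theorem entropy_identity {Ω U U1 SA XA1 XA2 YA ZA : Type}
    [Fintype Ω] [Fintype U] [Fintype U1] [Fintype SA] [Fintype XA1] [Fintype XA2]
    [Fintype YA] [Fintype ZA] [DecidableEq U] [DecidableEq U1] [DecidableEq SA]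
    [DecidableEq XA1] [DecidableEq XA2] [DecidableEq YA] [DecidableEq ZA]
    (p : Ω → ℝ) (hp : IsPmf p)
    (Uf : Ω → U) (U1f : Ω → U1) (Sf : Ω → SA) (X1f : Ω → XA1) (X2f : Ω → XA2)
    (Yf : Ω → YA) (Zf : Ω → ZA)
    -- (i) `S` is independent of `(U, U1, X2)`:
    (hindep : ∀ s t, law p (fun ω => (Sf ω, (Uf ω, U1f ω, X2f ω))) (s, t) =
      law p Sf s * law p (fun ω => (Uf ω, U1f ω, X2f ω)) t)
    -- (ii) `X1 = g(U, U1, S)` for a deterministic function `g`: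
    (hdet : ∃ g : U → U1 → SA → XA1, ∀ ω, X1f ω = g (Uf ω) (U1f ω) (Sf ω))
    -- (iii) `(U,U1) - (X1,X2,S) - (Y,Z)` is a Markov chain:
    (hmarkov : ∀ a b c,
      law p (fun ω => ((Yf ω, Zf ω), (Uf ω, U1f ω), (X1f ω, X2f ω, Sf ω))) (a, b, c) *
          law p (fun ω => (X1f ω, X2f ω, Sf ω)) c =
        law p (fun ω => ((Yf ω, Zf ω), (X1f ω, X2f ω, Sf ω))) (a, c) *
          law p (fun ω => ((Uf ω, U1f ω), (X1f ω, X2f ω, Sf ω))) (b, c)) :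
    cMI p U1f Yf (fun ω => (Uf ω, X2f ω)) -
        cMI p U1f Zf (fun ω => (Uf ω, X2f ω, Sf ω)) -
        Hc p Sf (fun ω => (Uf ω, U1f ω, X2f ω, Yf ω)) +
        Hc p Sf (fun ω => (Zf ω, Uf ω, X2f ω)) =
      cMI p (fun ω => (X1f ω, Sf ω)) Yf (fun ω => (Uf ω, X2f ω)) -
        cMI p (fun ω => (X1f ω, Sf ω)) Zf (fun ω => (Uf ω, X2f ω)) := by
  obtain ⟨g, hg⟩ := hdet
  have hnn := hp.1
  -- Unconditional independence is conditional independence given a constant.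
  have hI : CondIndepLaw p Sf (fun ω => (Uf ω, U1f ω, X2f ω)) (fun _ => ()) := by
    intro s t c
    have := hindep s t
    simp only [law, Prod.mk.injEq] at this ⊢
    simp [this, hp.2]
  have hM : CondIndepLaw p (fun ω => (Yf ω, Zf ω)) (fun ω => (Uf ω, U1f ω))
      (fun ω => (X1f ω, X2f ω, Sf ω)) := hmarkov
  have i1 := hI.entropy hnn
  have i2 := (hI.map_right fun t => (t.1, t.2.2)).entropy hnn
  have my := (hM.map_left Prod.fst).entropy hnn
  have mz := (hM.map_left Prod.snd).entropy hnn
  have myU := ((hM.map_left Prod.fst).map_right Prod.fst).entropy hnn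
  have mzU := ((hM.map_left Prod.snd).map_right Prod.fst).entropy hnn
  dsimp only at i1 i2 my mz myU mzU
  -- Match the joint entropies that involve the same variables up to order, constants, and `X1`.
  rw [H_congr p (fun ω => (Sf ω, (Uf ω, U1f ω, X2f ω), ()))
      (fun ω => (U1f ω, Uf ω, X2f ω, Sf ω)) (by intros; simp only [Prod.mk.injEq]; tauto),
    H_congr p (fun ω => ((Uf ω, U1f ω, X2f ω), ()))
      (fun ω => (U1f ω, Uf ω, X2f ω)) (by intros; simp only [Prod.mk.injEq]; tauto)] at i1
  rw [H_congr p (fun ω => (Sf ω, (Uf ω, X2f ω), ()))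
      (fun ω => (Uf ω, X2f ω, Sf ω)) (by intros; simp only [Prod.mk.injEq]; tauto),
    H_congr p (fun ω => ((Uf ω, X2f ω), ()))
      (fun ω => (Uf ω, X2f ω)) (by intros; simp only [Prod.mk.injEq]; tauto)] at i2
  rw [H_congr p (fun ω => (Yf ω, (Uf ω, U1f ω), (X1f ω, X2f ω, Sf ω)))
      (fun ω => (Sf ω, Uf ω, U1f ω, X2f ω, Yf ω))
      (by intros; simp only [Prod.mk.injEq, hg]; grind)] at my
  rw [H_congr p (fun ω => (Zf ω, (Uf ω, U1f ω), (X1f ω, X2f ω, Sf ω)))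
      (fun ω => (U1f ω, Zf ω, Uf ω, X2f ω, Sf ω))
      (by intros; simp only [Prod.mk.injEq, hg]; grind)] at mz
  rw [H_congr p (fun ω => (Yf ω, Uf ω, (X1f ω, X2f ω, Sf ω)))
      (fun ω => ((X1f ω, Sf ω), Yf ω, Uf ω, X2f ω))
      (by intros; simp only [Prod.mk.injEq]; tauto)] at myU
  rw [H_congr p (fun ω => (Zf ω, Uf ω, (X1f ω, X2f ω, Sf ω)))
      (fun ω => ((X1f ω, Sf ω), Zf ω, Uf ω, X2f ω))
      (by intros; simp only [Prod.mk.injEq]; tauto)] at mzU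
  have e1 := H_congr p (fun ω => (U1f ω, Yf ω, Uf ω, X2f ω))
    (fun ω => (Uf ω, U1f ω, X2f ω, Yf ω)) (by intros; simp only [Prod.mk.injEq]; tauto)
  have e2 := H_congr p (fun ω => (Zf ω, Uf ω, X2f ω, Sf ω))
    (fun ω => (Sf ω, Zf ω, Uf ω, X2f ω)) (by intros; simp only [Prod.mk.injEq]; tauto)
  unfold cMI Hc
  linarith

end Paper
end
end
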